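/- arXiv:2101.12327 — 6 statements merged into one kernel-verified Lean document; each statement's English description precedes it below -/
import Mathlib

section
/- Let 𝓕 be a family of tournaments, let G be an 𝓕-extremal graph, and let u, v, w be distinct vertices of G such that {u,v} ∉ E(G), {u,w} ∉ E(G), and {v,w} ∈ E(G). Then the graph obtained from G by deleting the edge {v,w} is also 𝓕-extremal. Furthermore, setting H = G − {u,v,w}, the vectors u⃗_{H,𝓕}, v⃗_{H,𝓕}, and w⃗_{H,𝓕} are all equal. -/
open scoped Classical

noncomputable section

universe u

variable {V : Type u}

/-- An orientation of a simple graph `G`: a relation choosing exactly one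
direction for each edge of `G`. -/
abbrev SimpleGraph.Orient (G : SimpleGraph V) : Type u :=
  {D : V → V → Prop // (∀ u v, D u v → G.Adj u v) ∧ ∀ u v, G.Adj u v → (D u v ↔ ¬ D v u)}

/-- A family of tournaments: for each `k`, a set of orientations of the
complete graph on `k` vertices. -/
abbrev TournFamily : Type :=
  ∀ k : ℕ, Set ((⊤ : SimpleGraph (Fin k)).Orient)

/-- The orientation `D` of `G` contains a copy of the `k`-vertex tournament `T`. -/
def ContainsCopy {G : SimpleGraph V} (D : G.Orient) {k : ℕ}
    (T : (⊤ : SimpleGraph (Fin k)).Orient) : Prop :=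
  ∃ φ : Fin k → V, Function.Injective φ ∧ ∀ i j, T.1 i j → D.1 (φ i) (φ j)

/-- The orientation `D` is `F`-free: it contains no copy of a member of `F`. -/
def FreeOrient {G : SimpleGraph V} (F : TournFamily) (D : G.Orient) : Prop :=
  ∀ (k : ℕ) (T : (⊤ : SimpleGraph (Fin k)).Orient), T ∈ F k → ¬ ContainsCopy D T

/-- `D(G, F)`: the number of `F`-free orientations of the graph `G`. -/
def numOrient (G : SimpleGraph V) (F : TournFamily) : ℕ :=
  Nat.card {D : G.Orient // FreeOrient F D}

/-- `D(n, F)`: the maximum of `D(G, F)` over all `n`-vertex graphs `G`. -/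
def maxOrient (n : ℕ) (F : TournFamily) : ℕ :=
  sSup (Set.range fun G : SimpleGraph (Fin n) => numOrient G F)

/-- A tournament is strongly connected if there is a directed path between
every ordered pair of vertices. -/
def IsStrongTourn {k : ℕ} (T : (⊤ : SimpleGraph (Fin k)).Orient) : Prop :=
  ∀ u v : Fin k, Relation.ReflTransGen T.1 u v

/-- `𝓢 k`: the family of strongly connected tournaments on `k` vertices. -/
def SFam (k : ℕ) : TournFamily := fun m => {T | m = k ∧ IsStrongTourn T}

/-- `t r n`: the number of edges of the `r`-partite Turán graph on `n` vertices. -/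
def turanNum (r n : ℕ) : ℕ := (SimpleGraph.turanGraph n r).edgeFinset.card

/-- `c_F(G ∣ H⃗)`: the number of ways to orient the edges of `G` outside the induced
subgraph on `A` extending the orientation `H` to an `F`-free orientation of `G`. -/
def extFull (G : SimpleGraph V) (F : TournFamily) (A : Set V)
    (H : (G.induce A).Orient) : ℕ :=
  Nat.card {D : G.Orient // FreeOrient F D ∧
    ∀ (a b : V) (ha : a ∈ A) (hb : b ∈ A), (D.1 a b ↔ H.1 ⟨a, ha⟩ ⟨b, hb⟩)}

/-- `c_F(v, H⃗)`: the number of ways to orient the edges of `G` between `v` and `A`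
so that the resulting orientation of the induced subgraph on `A ∪ {v}`, extending the
orientation `H` of the induced subgraph on `A`, is `F`-free. -/
def extVert (G : SimpleGraph V) (F : TournFamily) (A : Set V) (v : V)
    (H : (G.induce A).Orient) : ℕ :=
  Nat.card {D : (G.induce (insert v A)).Orient // FreeOrient F D ∧
    ∀ (a b : V) (ha : a ∈ A) (hb : b ∈ A),
      (D.1 ⟨a, Set.mem_insert_of_mem v ha⟩ ⟨b, Set.mem_insert_of_mem v hb⟩ ↔
        H.1 ⟨a, ha⟩ ⟨b, hb⟩)}

/-- `G` is `F`-extremal: it has the maximum number of `F`-free orientations among all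
graphs on its (`n`-element) vertex set. -/
def IsExtremal {n : ℕ} (G : SimpleGraph (Fin n)) (F : TournFamily) : Prop :=
  ∀ G' : SimpleGraph (Fin n), numOrient G' F ≤ numOrient G F

/-!
A copy of a tournament spans a clique, so for nonadjacent `x`, `y` the extensions of an orientation
`R` of `G - {x, y}` to `x` and to `y` can be chosen independently: the number of `F`-free
orientations of `G` is `∑ R, c(x, R) * c(y, R)`. Zykov symmetrization, replacing `y` by a clone of
`x` or conversely, turns this sum into `∑ R, c(x, R) ^ 2` or `∑ R, c(y, R) ^ 2`. Neither exceeds the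
original sum when `G` is extremal, so `∑ R, (c(x, R) - c(y, R)) ^ 2 ≤ 0` and the two vectors agree;
in particular cloning preserves extremality. Playing two clonings against each other carries the
equality over to orientations of `G - {u, v, w}`, and there an independent triple contributes
`∑ R, c(u, R) * c(v, R) * c(w, R)`, which is the same for `G` with `vw` deleted and for `G` with `v`
replaced by a clone of `u`.
-/

open scoped Finset Function

section General

lemma sup_inf_eq_left_of_inf_eq_inf {α : Type*} [DistribLattice α] {r s h k : α} (hr : r ≤ h)
    (hs : s ≤ k) (hrs : r ⊓ (h ⊓ k) = s ⊓ (h ⊓ k)) : (r ⊔ s) ⊓ h = r := by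
  have hsh : s ⊓ h ≤ r := calc
    s ⊓ h = s ⊓ (h ⊓ k) := by rw [inf_comm h k, ← inf_assoc, inf_eq_left.2 hs]
    _ = r ⊓ (h ⊓ k) := hrs.symm
    _ ≤ r := inf_le_left
  rw [inf_sup_right, inf_eq_left.2 hr, sup_eq_left.2 hsh]

lemma natCard_eq_card_of_range_eq {α β : Type*} {g : α → β} (hg : g.Injective) {s : Finset β}
    (hs : Set.range g = s) : Nat.card α = #s := by
  rw [← Nat.card_range_of_injective hg, hs, Nat.card_coe_set_eq, Set.ncard_coe_finset]

lemma eq_of_sum_sq_le_sum_mul {ι α : Type*} [CommRing α] [LinearOrder α] [IsStrictOrderedRing α]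
    {s : Finset ι} {f g : ι → α} (hf : ∑ i ∈ s, f i ^ 2 ≤ ∑ i ∈ s, f i * g i)
    (hg : ∑ i ∈ s, g i ^ 2 ≤ ∑ i ∈ s, f i * g i) : ∀ i ∈ s, f i = g i := by
  have hsum : ∑ i ∈ s, (f i - g i) ^ 2 = 0 := by
    refine le_antisymm ?_ (Finset.sum_nonneg fun i _ => sq_nonneg _)
    calc ∑ i ∈ s, (f i - g i) ^ 2
        = ∑ i ∈ s, f i ^ 2 + ∑ i ∈ s, g i ^ 2 - 2 * ∑ i ∈ s, f i * g i := by
          rw [Finset.mul_sum, ← Finset.sum_add_distrib, ← Finset.sum_sub_distrib]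
          exact Finset.sum_congr rfl fun i _ => by ring
      _ ≤ 0 := by linarith
  intro i hi
  have hi := (Finset.sum_eq_zero_iff_of_nonneg fun i _ => sq_nonneg (f i - g i)).1 hsum i hi
  exact sub_eq_zero.1 (pow_eq_zero_iff two_ne_zero |>.1 hi)

end General

/-- The relation `R` contains no copy of a member of `F`: `FreeOrient` without reference to a
host graph. -/
def FreeRel (F : TournFamily) (R : V → V → Prop) : Prop :=
  ∀ (k : ℕ) (T : (⊤ : SimpleGraph (Fin k)).Orient), T ∈ F k →
    ¬ ∃ φ : Fin k → V, φ.Injective ∧ ∀ i j, T.1 i j → R (φ i) (φ j)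

/-- The relation `R` is an orientation of `G`. Unlike terms of type `G.Orient`, orientations of
different graphs on `V` can be compared, intersected and joined. -/
def IsOrientation (G : SimpleGraph V) (R : V → V → Prop) : Prop :=
  (∀ u v, R u v → G.Adj u v) ∧ ∀ u v, G.Adj u v → (R u v ↔ ¬ R v u)

/-- Joining `H` and `K` creates no new cliques. Copies of a tournament are cliques, so
`F`-freeness of an orientation of `H ⊔ K` can then be tested on `H` and on `K` separately. -/
def CliqueSeparated (H K : SimpleGraph V) : Prop :=
  ∀ s : Set V, (H ⊔ K).IsClique s → H.IsClique s ∨ K.IsClique s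

section FreeRel

variable {W : Type*} {F : TournFamily}

lemma FreeRel.mono {R S : V → V → Prop} (hS : FreeRel F S) (hRS : R ≤ S) : FreeRel F R := by
  rintro k T hT ⟨φ, hφ, hR⟩
  exact hS k T hT ⟨φ, hφ, fun i j hij => hRS _ _ (hR i j hij)⟩

lemma FreeRel.onFun {S : W → W → Prop} (hS : FreeRel F S) {f : V → W} (hf : f.Injective) :
    FreeRel F (S on f) := by
  rintro k T hT ⟨φ, hφ, hT'⟩
  exact hS k T hT ⟨f ∘ φ, hf.comp hφ, hT'⟩

lemma isClique_range_of_tournament {k : ℕ} (T : (⊤ : SimpleGraph (Fin k)).Orient)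
    {G : SimpleGraph V} {φ : Fin k → V} (hφ : ∀ i j, T.1 i j → G.Adj (φ i) (φ j)) :
    G.IsClique (Set.range φ) := by
  rintro _ ⟨i, rfl⟩ _ ⟨j, rfl⟩ hij
  by_cases hT : T.1 i j
  · exact hφ i j hT
  · have hji : T.1 j i := by simpa [hT] using T.2.2 i j (ne_of_apply_ne φ hij)
    exact (hφ j i hji).symm

lemma FreeRel.of_inf_adj {H K : SimpleGraph V} (hHK : CliqueSeparated H K) {R : V → V → Prop}
    (hR : R ≤ (H ⊔ K).Adj) (hRH : FreeRel F (R ⊓ H.Adj)) (hRK : FreeRel F (R ⊓ K.Adj)) :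
    FreeRel F R := by
  rintro k T hT ⟨φ, hφ, hTR⟩
  have hne {i j : Fin k} (hij : T.1 i j) : φ i ≠ φ j := hφ.ne (T.2.1 i j hij)
  rcases hHK _ (isClique_range_of_tournament T fun i j hij => hR _ _ (hTR i j hij)) with hs | hs
  · exact hRH k T hT ⟨φ, hφ, fun i j hij => ⟨hTR i j hij, hs ⟨i, rfl⟩ ⟨j, rfl⟩ (hne hij)⟩⟩
  · exact hRK k T hT ⟨φ, hφ, fun i j hij => ⟨hTR i j hij, hs ⟨i, rfl⟩ ⟨j, rfl⟩ (hne hij)⟩⟩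

/-- Nonemptiness matters: on no vertices there is no copy of the one-vertex tournament. -/
lemma FreeRel.map [Nonempty V] {R : V → V → Prop} (hR : FreeRel F R) (f : V ↪ W) :
    FreeRel F (Relation.Map R f f) := by
  rintro k T hT ⟨φ, hφ, hTR⟩
  rcases subsingleton_or_nontrivial (Fin k) with _ | _
  · exact hR k T hT ⟨fun _ => Classical.arbitrary V, fun i j _ => Subsingleton.elim i j,
      fun i j hij => absurd (Subsingleton.elim i j) (T.2.1 i j hij)⟩
  · have hrange (i : Fin k) : ∃ a, f a = φ i := by
      obtain ⟨j, hji⟩ := exists_ne i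
      by_cases hT : T.1 i j
      · obtain ⟨a, -, -, ha, -⟩ := hTR i j hT
        exact ⟨a, ha⟩
      · obtain ⟨-, a, -, -, ha⟩ := hTR j i ((T.2.2 j i hji).2 hT)
        exact ⟨a, ha⟩
    choose ψ hψ using hrange
    refine hR k T hT ⟨ψ, fun i j hij => hφ (by rw [← hψ, hij, hψ]), fun i j hij => ?_⟩
    obtain ⟨a, b, hab, ha, hb⟩ := hTR i j hij
    rwa [f.injective ((hψ i).trans ha.symm), f.injective ((hψ j).trans hb.symm)]

end FreeRel

section IsOrientation

variable {W : Type*} {G H K : SimpleGraph V} {R : V → V → Prop}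

lemma IsOrientation.inf_adj (hR : IsOrientation G R) (hHG : H ≤ G) :
    IsOrientation H (R ⊓ H.Adj) := by
  refine ⟨fun a b hab => hab.2, fun a b hab => ?_⟩
  simpa [hab, hab.symm] using hR.2 a b (hHG hab)

lemma IsOrientation.of_inf_adj (hR : R ≤ (H ⊔ K).Adj) (hRH : IsOrientation H (R ⊓ H.Adj))
    (hRK : IsOrientation K (R ⊓ K.Adj)) : IsOrientation (H ⊔ K) R := by
  refine ⟨hR, fun a b hab => ?_⟩
  rcases hab with hab | hab
  · simpa [hab, hab.symm] using hRH.2 a b hab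
  · simpa [hab, hab.symm] using hRK.2 a b hab

lemma IsOrientation.onFun {G : SimpleGraph W} {R : W → W → Prop} (hR : IsOrientation G R)
    (f : V → W) : IsOrientation (G.comap f) (R on f) :=
  ⟨fun _ _ => hR.1 _ _, fun _ _ => hR.2 _ _⟩

lemma IsOrientation.map (hR : IsOrientation G R) (f : V ↪ W) :
    IsOrientation (G.map f) (Relation.Map R f f) := by
  refine ⟨fun a b hab => ?_, fun a b hab => ?_⟩
  · obtain ⟨c, d, hcd, rfl, rfl⟩ := hab
    exact SimpleGraph.map_adj_apply.2 (hR.1 c d hcd)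
  · obtain ⟨c, d, hcd, rfl, rfl⟩ := (G.map_adj f _ _).1 hab
    simpa [Relation.Map, f.injective.eq_iff] using hR.2 c d hcd

lemma IsOrientation.map_onFun {G : SimpleGraph V} {f : V ↪ W} {R : W → W → Prop}
    (hR : IsOrientation (G.map f) R) : Relation.Map (R on f) f f = R := by
  refine le_antisymm (Relation.map_onFun_le f) fun a b hab => ?_
  obtain ⟨a', b', -, rfl, rfl⟩ := (G.map_adj f _ _).1 (hR.1 a b hab)
  exact ⟨a', b', hab, rfl, rfl⟩

end IsOrientation

section Count

variable [Fintype V] {F : TournFamily} {G H K : SimpleGraph V} {R S : V → V → Prop}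

/-- The `F`-free orientations of `G`, as relations. -/
def freeOrients (F : TournFamily) (G : SimpleGraph V) : Finset (V → V → Prop) :=
  {R | IsOrientation G R ∧ FreeRel F R}

/-- The `F`-free orientations of `G` that extend the orientation `R` of the subgraph `H`. -/
def extensions (F : TournFamily) (H G : SimpleGraph V) (R : V → V → Prop) :
    Finset (V → V → Prop) :=
  {S ∈ freeOrients F G | S ⊓ H.Adj = R}

lemma mem_freeOrients : R ∈ freeOrients F G ↔ IsOrientation G R ∧ FreeRel F R := by
  simp [freeOrients]

lemma mem_extensions : S ∈ extensions F H G R ↔ S ∈ freeOrients F G ∧ S ⊓ H.Adj = R := by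
  simp [extensions]

lemma le_adj_of_mem_freeOrients (hR : R ∈ freeOrients F G) : R ≤ G.Adj :=
  (mem_freeOrients.1 hR).1.1

lemma inf_adj_mem_freeOrients (hR : R ∈ freeOrients F G) (hHG : H ≤ G) :
    R ⊓ H.Adj ∈ freeOrients F H := by
  obtain ⟨hG, hF⟩ := mem_freeOrients.1 hR
  exact mem_freeOrients.2 ⟨hG.inf_adj hHG, hF.mono inf_le_left⟩

lemma mem_freeOrients_of_inf_adj (hHK : CliqueSeparated H K) (hR : R ≤ (H ⊔ K).Adj)
    (hRH : R ⊓ H.Adj ∈ freeOrients F H) (hRK : R ⊓ K.Adj ∈ freeOrients F K) :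
    R ∈ freeOrients F (H ⊔ K) := by
  obtain ⟨hH, hFH⟩ := mem_freeOrients.1 hRH
  obtain ⟨hK, hFK⟩ := mem_freeOrients.1 hRK
  exact mem_freeOrients.2 ⟨.of_inf_adj hR hH hK, .of_inf_adj hHK hR hFH hFK⟩

lemma numOrient_eq_card (G : SimpleGraph V) (F : TournFamily) :
    numOrient G F = #(freeOrients F G) := by
  refine natCard_eq_card_of_range_eq (g := fun D => D.1.1)
    (Subtype.val_injective.comp Subtype.val_injective) (Set.ext fun R => ?_)
  simp only [Set.mem_range, Finset.mem_coe, mem_freeOrients]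
  exact ⟨by rintro ⟨D, rfl⟩; exact ⟨D.1.2, D.2⟩, fun hR => ⟨⟨⟨R, hR.1⟩, hR.2⟩, rfl⟩⟩

lemma card_freeOrients_eq_sum (F : TournFamily) (H G : SimpleGraph V) :
    #(freeOrients F G) = ∑ R, #(extensions F H G R) :=
  Finset.card_eq_sum_card_fiberwise fun _ _ => Finset.mem_coe.2 (Finset.mem_univ _)

lemma card_extensions_eq_sum (hHK : H ≤ K) (hKG : K ≤ G) :
    #(extensions F H G R) = ∑ S ∈ extensions F H K R, #(extensions F K G S) := by
  rw [Finset.card_eq_sum_card_fiberwise (f := (· ⊓ K.Adj)) (t := extensions F H K R)]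
  · refine Finset.sum_congr rfl fun S hS => congrArg _ ?_
    obtain ⟨-, rfl⟩ := mem_extensions.1 hS
    ext S'
    have hadj : K.Adj ⊓ H.Adj = H.Adj := inf_eq_right.2 hHK
    simp only [Finset.mem_filter, mem_extensions]
    constructor
    · exact fun h => ⟨h.1.1, h.2⟩
    · rintro ⟨h, rfl⟩
      exact ⟨⟨h, by rw [inf_assoc, hadj]⟩, rfl⟩
  · intro S hS
    obtain ⟨hSG, rfl⟩ := mem_extensions.1 hS
    refine Finset.mem_coe.2 (mem_extensions.2 ⟨inf_adj_mem_freeOrients hSG hKG, ?_⟩)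
    rw [inf_assoc, inf_eq_right.2 (show H.Adj ≤ K.Adj from hHK)]

lemma card_extensions_sup (hHK : CliqueSeparated H K) (hS : S ∈ freeOrients F K) :
    #(extensions F K (H ⊔ K) S) = #(extensions F (H ⊓ K) H (S ⊓ (H ⊓ K).Adj)) := by
  have hSK : S ≤ K.Adj := le_adj_of_mem_freeOrients hS
  have glue_inf {R : V → V → Prop} (hR : R ∈ extensions F (H ⊓ K) H (S ⊓ (H ⊓ K).Adj)) :
      (R ⊔ S) ⊓ H.Adj = R ∧ (R ⊔ S) ⊓ K.Adj = S := by
    obtain ⟨hRH, hRS⟩ := mem_extensions.1 hR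
    have hRH : R ≤ H.Adj := le_adj_of_mem_freeOrients hRH
    refine ⟨sup_inf_eq_left_of_inf_eq_inf hRH hSK hRS, ?_⟩
    rw [sup_comm]
    exact sup_inf_eq_left_of_inf_eq_inf hSK hRH (by rw [inf_comm K.Adj]; exact hRS.symm)
  refine Finset.card_bij' (fun R _ => R ⊓ H.Adj) (fun R _ => R ⊔ S) ?_ ?_ ?_ ?_
  · intro R hR
    obtain ⟨hRHK, rfl⟩ := mem_extensions.1 hR
    refine mem_extensions.2 ⟨inf_adj_mem_freeOrients hRHK le_sup_left, ?_⟩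
    have hHinf : H.Adj ⊓ (H ⊓ K).Adj = (H ⊓ K).Adj := inf_eq_right.2 inf_le_left
    have hKinf : K.Adj ⊓ (H ⊓ K).Adj = (H ⊓ K).Adj := inf_eq_right.2 inf_le_right
    rw [inf_assoc, hHinf, inf_assoc, hKinf]
  · intro R hR
    obtain ⟨hRH, hRK⟩ := glue_inf hR
    have hRfree := (mem_extensions.1 hR).1
    refine mem_extensions.2 ⟨mem_freeOrients_of_inf_adj hHK ?_ ?_ ?_, hRK⟩
    · exact sup_le_sup (le_adj_of_mem_freeOrients hRfree) hSK
    · rwa [hRH]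
    · rwa [hRK]
  · intro R hR
    obtain ⟨hRHK, rfl⟩ := mem_extensions.1 hR
    rw [← inf_sup_left]
    exact inf_eq_left.2 (le_adj_of_mem_freeOrients hRHK)
  · exact fun R hR => (glue_inf hR).1

lemma card_extensions_sup_eq_mul (hHK : CliqueSeparated H K) (R : V → V → Prop) :
    #(extensions F (H ⊓ K) (H ⊔ K) R) =
      #(extensions F (H ⊓ K) H R) * #(extensions F (H ⊓ K) K R) := by
  rw [card_extensions_eq_sum inf_le_right le_sup_right, mul_comm, ← smul_eq_mul,
    ← Finset.sum_const]
  refine Finset.sum_congr rfl fun S hS => ?_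
  obtain ⟨hSK, rfl⟩ := mem_extensions.1 hS
  exact card_extensions_sup hHK hSK

lemma onFun_mem_freeOrients (σ : Equiv.Perm V) :
    (R on σ) ∈ freeOrients F (G.comap σ) ↔ R ∈ freeOrients F G := by
  simp only [mem_freeOrients]
  refine ⟨fun ⟨hG, hF⟩ => ?_, fun ⟨hG, hF⟩ => ⟨hG.onFun σ, hF.onFun σ.injective⟩⟩
  have hGσ : (G.comap σ).comap σ.symm = G := by ext; simp
  have hRσ : ((R on σ) on σ.symm) = R := by ext; simp [Function.onFun]
  rw [← hGσ, ← hRσ]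
  exact ⟨hG.onFun σ.symm, hF.onFun σ.symm.injective⟩

lemma card_extensions_comap (σ : Equiv.Perm V) (hσ : ∀ a ∈ H.support, σ a = a)
    (R : V → V → Prop) : #(extensions F H (G.comap σ) R) = #(extensions F H G R) := by
  symm
  refine Finset.card_equiv (σ.symm.arrowCongr (σ.symm.arrowCongr (.refl Prop))) fun S => ?_
  have hinf : (S on σ) ⊓ H.Adj = S ⊓ H.Adj := by
    ext a b
    refine and_congr_left fun hab => ?_
    rw [Function.onFun_apply, hσ a ⟨b, hab⟩, hσ b ⟨a, hab.symm⟩]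
  change _ ↔ (S on σ) ∈ _
  rw [mem_extensions, mem_extensions, onFun_mem_freeOrients, hinf]

end Count

section InducedOn

variable {G : SimpleGraph V} {A B C : Set V} {a b x y : V}

/-- The induced subgraph `G[A]`, with the vertices outside `A` kept as isolated vertices so that
all these graphs live on `V`. -/
def inducedOn (G : SimpleGraph V) (A : Set V) : SimpleGraph V :=
  (G.induce A).spanningCoe

lemma inducedOn_adj : (inducedOn G A).Adj a b ↔ G.Adj a b ∧ a ∈ A ∧ b ∈ A := by
  rw [inducedOn, SimpleGraph.map_adj]
  constructor
  · rintro ⟨⟨a, ha⟩, ⟨b, hb⟩, hab, rfl, rfl⟩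
    exact ⟨hab, ha, hb⟩
  · rintro ⟨hab, ha, hb⟩
    exact ⟨⟨a, ha⟩, ⟨b, hb⟩, hab, rfl, rfl⟩

lemma inducedOn_univ (G : SimpleGraph V) : inducedOn G Set.univ = G :=
  G.spanningCoe_induce_univ

lemma inducedOn_mono (G : SimpleGraph V) (hAB : A ⊆ B) : inducedOn G A ≤ inducedOn G B := by
  intro a b
  simp only [inducedOn_adj]
  exact fun ⟨hab, ha, hb⟩ => ⟨hab, hAB ha, hAB hb⟩

lemma inducedOn_inter (G : SimpleGraph V) (B C : Set V) :
    inducedOn G (B ∩ C) = inducedOn G B ⊓ inducedOn G C := by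
  ext a b
  simp only [inducedOn_adj, SimpleGraph.inf_adj, Set.mem_inter_iff]
  tauto

lemma inducedOn_insert_sup (hAC : A ⊆ C) (hx : ∀ c ∈ C \ A, ¬ G.Adj x c) :
    inducedOn G (insert x A) ⊔ inducedOn G C = inducedOn G (insert x C) := by
  refine le_antisymm (sup_le (inducedOn_mono G (Set.insert_subset_insert hAC))
    (inducedOn_mono G (Set.subset_insert x C))) fun a b hab => ?_
  have ha := hx a
  have hb := hx b
  simp only [inducedOn_adj, SimpleGraph.sup_adj] at hab ⊢
  grind [SimpleGraph.adj_comm, SimpleGraph.Adj.ne]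

lemma inducedOn_insert_inf (hAC : A ⊆ C) (hx : x ∉ C) :
    inducedOn G (insert x A) ⊓ inducedOn G C = inducedOn G A := by
  rw [← inducedOn_inter, Set.insert_inter_of_notMem hx, Set.inter_eq_left.2 hAC]

lemma cliqueSeparated_inducedOn (G : SimpleGraph V) (B C : Set V) :
    CliqueSeparated (inducedOn G B) (inducedOn G C) := by
  intro s hs
  have hs' {a b : V} (ha : a ∈ s) (hb : b ∈ s) (hab : a ≠ b) :
      G.Adj a b ∧ (a ∈ B ∧ b ∈ B ∨ a ∈ C ∧ b ∈ C) := by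
    simpa only [SimpleGraph.sup_adj, inducedOn_adj, ← and_or_left] using hs ha hb hab
  by_cases hp : ∃ p ∈ s, p ∉ B
  · obtain ⟨p, hps, hpB⟩ := hp
    right
    intro a ha b hb hab
    rw [inducedOn_adj]
    grind
  · left
    intro a ha b hb hab
    rw [inducedOn_adj]
    grind

lemma inducedOn_replaceVertex_of_notMem (hy : y ∉ B) :
    inducedOn (G.replaceVertex x y) B = inducedOn G B := by
  ext a b
  simp only [inducedOn_adj]
  refine and_congr_left fun ⟨ha, hb⟩ => ?_
  exact G.adj_replaceVertex_iff_of_ne x (ne_of_mem_of_not_mem ha hy) (ne_of_mem_of_not_mem hb hy)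

lemma inducedOn_replaceVertex_insert (hx : x ∉ A) (hy : y ∉ A) :
    inducedOn (G.replaceVertex x y) (insert y A) =
      (inducedOn G (insert x A)).comap (Equiv.swap x y) := by
  ext a b
  simp only [SimpleGraph.comap_adj, inducedOn_adj, SimpleGraph.replaceVertex, Equiv.swap_apply_def]
  grind [SimpleGraph.irrefl]

lemma inducedOn_deleteEdges (h : x ∉ B ∨ y ∉ B) :
    inducedOn (G.deleteEdges {s(x, y)}) B = inducedOn G B := by
  ext a b
  simp only [inducedOn_adj, SimpleGraph.deleteEdges_adj, Set.mem_singleton_iff, Sym2.eq_iff]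
  grind

lemma IsOrientation.inf_inducedOn_adj_eq_map_iff {S : V → V → Prop}
    (hS : IsOrientation (inducedOn G B) S) (R : A → A → Prop) :
    S ⊓ (inducedOn G A).Adj = Relation.Map R (↑) (↑) ↔
      ∀ (a b : V) (ha : a ∈ A) (hb : b ∈ A), S a b ↔ R ⟨a, ha⟩ ⟨b, hb⟩ := by
  have hSG {a b : V} (hab : S a b) : G.Adj a b := (inducedOn_adj.1 (hS.1 a b hab)).1
  have hinf (a b : V) : (S ⊓ (inducedOn G A).Adj) a b ↔ S a b ∧ a ∈ A ∧ b ∈ A := by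
    simp only [Pi.inf_apply, inf_Prop_eq, inducedOn_adj]
    exact ⟨fun h => ⟨h.1, h.2.2⟩, fun h => ⟨h.1, hSG h.1, h.2⟩⟩
  have hmap (a b : V) : Relation.Map R (↑) (↑) a b ↔ ∃ (ha : a ∈ A) (hb : b ∈ A),
      R ⟨a, ha⟩ ⟨b, hb⟩ := by
    simp [Relation.Map]
  simp only [funext_iff, eq_iff_iff, hinf, hmap]
  grind

end InducedOn

section ExtCount

variable [Fintype V] {F : TournFamily} {G : SimpleGraph V} {A C : Set V} {x y z : V}
  {S : V → V → Prop}

/-- `c_F(x, R)`, for an `F`-free orientation `R` of `G[A]`: the number of extensions of `R` to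
an `F`-free orientation of `G[A ∪ {x}]`. See `extVert_eq_extCount`. -/
def extCount (F : TournFamily) (G : SimpleGraph V) (A : Set V) (x : V) (R : V → V → Prop) : ℕ :=
  #(extensions F (inducedOn G A) (inducedOn G (insert x A)) R)

lemma extCount_eq_extCount_inf_adj (hAC : A ⊆ C) (hxC : x ∉ C) (hx : ∀ c ∈ C \ A, ¬ G.Adj x c)
    (hS : S ∈ freeOrients F (inducedOn G C)) :
    extCount F G C x S = extCount F G A x (S ⊓ (inducedOn G A).Adj) := by
  have h := card_extensions_sup (cliqueSeparated_inducedOn G (insert x A) C) hS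
  rwa [inducedOn_insert_sup hAC hx, inducedOn_insert_inf hAC hxC] at h

lemma card_extensions_insert_eq_mul (hAC : A ⊆ C) (hxC : x ∉ C)
    (hx : ∀ c ∈ C \ A, ¬ G.Adj x c) (R : V → V → Prop) :
    #(extensions F (inducedOn G A) (inducedOn G (insert x C)) R) =
      extCount F G A x R * #(extensions F (inducedOn G A) (inducedOn G C) R) := by
  have h := card_extensions_sup_eq_mul (F := F) (cliqueSeparated_inducedOn G (insert x A) C) R
  rwa [inducedOn_insert_sup hAC hx, inducedOn_insert_inf hAC hxC] at h

lemma extVert_eq_extCount (F : TournFamily) (G : SimpleGraph V) (A : Set V) (x : V)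
    (H : (G.induce A).Orient) :
    extVert G F A x H = extCount F G A x (Relation.Map H.1 (↑) (↑)) := by
  let e : ↥(insert x A) ↪ V := .subtype _
  refine natCard_eq_card_of_range_eq (g := fun D => Relation.Map D.1.1 e e) ?_
    (Set.ext fun S => ?_)
  · intro D D' h
    refine Subtype.ext (Subtype.ext ?_)
    rw [← Relation.onFun_map_eq_of_injective e.injective (r := D.1.1)]
    simp only [h, Relation.onFun_map_eq_of_injective e.injective]
  · simp only [Set.mem_range, Finset.mem_coe, mem_extensions, mem_freeOrients]
    constructor
    · rintro ⟨⟨D, hDF, hDH⟩, rfl⟩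
      have hD : IsOrientation (inducedOn G (insert x A)) (Relation.Map D.1 e e) :=
        IsOrientation.map D.2 e
      refine ⟨⟨hD, FreeRel.map hDF e⟩, (hD.inf_inducedOn_adj_eq_map_iff H.1).2 fun a b ha hb => ?_⟩
      rw [← hDH a b ha hb]
      exact Relation.map_apply_apply e.injective e.injective D.1
        ⟨a, Set.mem_insert_of_mem x ha⟩ ⟨b, Set.mem_insert_of_mem x hb⟩
    · rintro ⟨⟨hS, hSF⟩, hSH⟩
      have hind : (inducedOn G (insert x A)).comap e = G.induce (insert x A) :=
        SimpleGraph.induce_spanningCoe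
      exact ⟨⟨⟨(S on e), hind ▸ hS.onFun e⟩, hSF.onFun e.injective,
        (hS.inf_inducedOn_adj_eq_map_iff H.1).1 hSH⟩, hS.map_onFun⟩

lemma numOrient_eq_sum_card_extensions (G : SimpleGraph V) (F : TournFamily) (A : Set V) :
    numOrient G F = ∑ R, #(extensions F (inducedOn G A) (inducedOn G Set.univ) R) := by
  rw [numOrient_eq_card, card_freeOrients_eq_sum F (inducedOn G A), inducedOn_univ]

lemma numOrient_eq_sum_mul (hxy : x ≠ y) (axy : ¬ G.Adj x y) :
    numOrient G F = ∑ R, extCount F G {x, y}ᶜ x R * extCount F G {x, y}ᶜ y R := by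
  have huniv : (Set.univ : Set V) = insert x (insert y {x, y}ᶜ) := by
    simpa only [Set.insert_union, Set.singleton_union] using (Set.union_compl_self {x, y}).symm
  rw [numOrient_eq_sum_card_extensions G F {x, y}ᶜ, huniv]
  exact Finset.sum_congr rfl fun R _ =>
    card_extensions_insert_eq_mul (Set.subset_insert y _) (by simp [hxy])
      (by simp +contextual [axy]) R

lemma numOrient_eq_sum_mul_mul (hxy : x ≠ y) (hxz : x ≠ z) (hyz : y ≠ z) (axy : ¬ G.Adj x y)
    (axz : ¬ G.Adj x z) (ayz : ¬ G.Adj y z) :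
    numOrient G F = ∑ R, extCount F G {x, y, z}ᶜ x R *
      (extCount F G {x, y, z}ᶜ y R * extCount F G {x, y, z}ᶜ z R) := by
  have huniv : (Set.univ : Set V) = insert x (insert y (insert z {x, y, z}ᶜ)) := by
    simpa only [Set.insert_union, Set.singleton_union] using (Set.union_compl_self {x, y, z}).symm
  rw [numOrient_eq_sum_card_extensions G F {x, y, z}ᶜ, huniv]
  refine Finset.sum_congr rfl fun R _ => ?_
  rw [card_extensions_insert_eq_mul
      ((Set.subset_insert z _).trans (Set.subset_insert y _)) (by simp [hxy, hxz]) ?_ R,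
    card_extensions_insert_eq_mul (Set.subset_insert z _) (by simp [hyz])
      (by simp +contextual [hxz.symm, ayz]) R]
  · rfl
  · rintro c ⟨rfl | rfl | hc, hc'⟩
    exacts [axy, axz, absurd hc hc']

lemma extCount_replaceVertex_of_ne (hyA : y ∉ A) (hzy : z ≠ y) (R : V → V → Prop) :
    extCount F (G.replaceVertex x y) A z R = extCount F G A z R := by
  rw [extCount, extCount, inducedOn_replaceVertex_of_notMem hyA,
    inducedOn_replaceVertex_of_notMem (by simp [hyA, hzy.symm])]

lemma extCount_replaceVertex (hxA : x ∉ A) (hyA : y ∉ A) (R : V → V → Prop) :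
    extCount F (G.replaceVertex x y) A y R = extCount F G A x R := by
  rw [extCount, extCount, inducedOn_replaceVertex_of_notMem hyA,
    inducedOn_replaceVertex_insert hxA hyA, card_extensions_comap]
  rintro a ⟨b, hab⟩
  obtain ⟨-, ha, -⟩ := inducedOn_adj.1 hab
  exact Equiv.swap_apply_of_ne_of_ne (ne_of_mem_of_not_mem ha hxA) (ne_of_mem_of_not_mem ha hyA)

lemma extCount_deleteEdges (h : x ∉ insert z A ∨ y ∉ insert z A) (R : V → V → Prop) :
    extCount F (G.deleteEdges {s(x, y)}) A z R = extCount F G A z R := by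
  have hA : x ∉ A ∨ y ∉ A :=
    h.imp (mt (Set.mem_insert_of_mem z)) (mt (Set.mem_insert_of_mem z))
  rw [extCount, extCount, inducedOn_deleteEdges hA, inducedOn_deleteEdges h]

lemma numOrient_replaceVertex (hxy : x ≠ y) :
    numOrient (G.replaceVertex x y) F = ∑ R, extCount F G {x, y}ᶜ x R ^ 2 := by
  rw [numOrient_eq_sum_mul hxy (G.not_adj_replaceVertex_same x y)]
  refine Finset.sum_congr rfl fun R _ => ?_
  rw [extCount_replaceVertex (by simp) (by simp), extCount_replaceVertex_of_ne (by simp) hxy, sq]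

end ExtCount

/-- `G` has the maximum number of `F`-free orientations among all graphs on its vertex set:
`IsExtremal` for an arbitrary vertex type. -/
def MaximizesOrient (G : SimpleGraph V) (F : TournFamily) : Prop :=
  ∀ G' : SimpleGraph V, numOrient G' F ≤ numOrient G F

namespace MaximizesOrient

variable {F : TournFamily} {G : SimpleGraph V} {u v w x y z : V} {R : V → V → Prop}

lemma extCount_eq [Fintype V] (hG : MaximizesOrient G F) (hxy : x ≠ y) (axy : ¬ G.Adj x y)
    (R : V → V → Prop) : extCount F G {x, y}ᶜ x R = extCount F G {x, y}ᶜ y R := by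
  have hx := hG (G.replaceVertex x y)
  have hy := hG (G.replaceVertex y x)
  rw [numOrient_replaceVertex hxy, numOrient_eq_sum_mul hxy axy] at hx
  rw [numOrient_replaceVertex hxy.symm, numOrient_eq_sum_mul hxy axy, Set.pair_comm y x] at hy
  have h := eq_of_sum_sq_le_sum_mul (s := Finset.univ) (α := ℤ)
    (f := fun R => extCount F G {x, y}ᶜ x R) (g := fun R => extCount F G {x, y}ᶜ y R)
    (by exact_mod_cast hx) (by exact_mod_cast hy) R (Finset.mem_univ R)
  exact_mod_cast h

lemma numOrient_replaceVertex_eq [Finite V] (hG : MaximizesOrient G F) (hxy : x ≠ y)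
    (axy : ¬ G.Adj x y) : numOrient (G.replaceVertex x y) F = numOrient G F := by
  have := Fintype.ofFinite V
  rw [numOrient_replaceVertex hxy, numOrient_eq_sum_mul hxy axy]
  exact Finset.sum_congr rfl fun R _ => by rw [← hG.extCount_eq hxy axy, sq]

lemma replaceVertex [Finite V] (hG : MaximizesOrient G F) (hxy : x ≠ y) (axy : ¬ G.Adj x y) :
    MaximizesOrient (G.replaceVertex x y) F :=
  fun K => (hG K).trans_eq (hG.numOrient_replaceVertex_eq hxy axy).symm

/-- After `x` is cloned onto `z`, the vertices `y` and `z` are nonadjacent, so they have equally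
many extensions over any orientation of the rest of the graph, in particular over one that
extends `R` to `x`. -/
lemma extCount_eq_of_ne_zero [Fintype V] (hG : MaximizesOrient G F) (hxy : x ≠ y) (hxz : x ≠ z)
    (hyz : y ≠ z) (axy : ¬ G.Adj x y) (axz : ¬ G.Adj x z)
    (hR : extCount F G {x, y, z}ᶜ x R ≠ 0) :
    extCount F G {x, y, z}ᶜ y R = extCount F G {x, y, z}ᶜ x R := by
  let K := G.replaceVertex x z
  let A : Set V := {x, y, z}ᶜ
  have hxA : x ∉ A := by simp [A]
  have hzA : z ∉ A := by simp [A]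
  have hinsert : insert x A = {y, z}ᶜ := by ext; grind
  have ayx : ¬ K.Adj y x := by
    rw [G.adj_replaceVertex_iff_of_ne x hyz hxz]
    exact fun h => axy h.symm
  have azx : ¬ K.Adj z x := fun h => G.not_adj_replaceVertex_same x z h.symm
  have ayz : ¬ K.Adj y z := by
    rw [SimpleGraph.adj_comm, G.adj_replaceVertex_iff_of_ne_right x hyz]
    exact axy
  obtain ⟨S, hSK, rfl⟩ : ∃ S ∈ freeOrients F (inducedOn K (insert x A)),
      S ⊓ (inducedOn K A).Adj = R := by
    rw [← extCount_replaceVertex_of_ne hzA hxz] at hR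
    exact (Finset.card_ne_zero.1 hR).imp fun S => mem_extensions.1
  have restrict {t : V} (ht : t ∉ insert x A) (atx : ¬ K.Adj t x) :
      extCount F K A t (S ⊓ (inducedOn K A).Adj) = extCount F K {y, z}ᶜ t S := by
    rw [← hinsert]
    refine (extCount_eq_extCount_inf_adj (Set.subset_insert x A) ht ?_ hSK).symm
    rintro c ⟨rfl | hc, hcA⟩
    exacts [atx, absurd hc hcA]
  calc extCount F G A y _
      = extCount F K A y _ := (extCount_replaceVertex_of_ne hzA hyz _).symm
    _ = extCount F K {y, z}ᶜ y S := restrict (by simp [hinsert]) ayx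
    _ = extCount F K {y, z}ᶜ z S := (hG.replaceVertex hxz axz).extCount_eq hyz ayz S
    _ = extCount F K A z _ := (restrict (by simp [hinsert]) azx).symm
    _ = extCount F G A x _ := extCount_replaceVertex hxA hzA _

lemma extCount_eq_of_not_adj [Fintype V] (hG : MaximizesOrient G F) (huv : u ≠ v) (huw : u ≠ w)
    (hvw : v ≠ w) (auv : ¬ G.Adj u v) (auw : ¬ G.Adj u w) (R : V → V → Prop) :
    extCount F G {u, v, w}ᶜ v R = extCount F G {u, v, w}ᶜ u R := by
  rcases eq_or_ne (extCount F G {u, v, w}ᶜ u R) 0 with hu | hu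
  · -- If `v` had an extension, it could serve as the cloned vertex once `w` is made a clone of `u`.
    by_contra hv
    have hwA : w ∉ ({v, u, w}ᶜ : Set V) := by simp
    have avu : ¬ (G.replaceVertex u w).Adj v u := by
      rwa [G.adj_replaceVertex_iff_of_ne u hvw huw, SimpleGraph.adj_comm]
    have avw : ¬ (G.replaceVertex u w).Adj v w := by
      rwa [SimpleGraph.adj_comm, G.adj_replaceVertex_iff_of_ne_right u hvw]
    rw [Set.insert_comm] at hu hv
    have h := (hG.replaceVertex huw auw).extCount_eq_of_ne_zero (R := R) huv.symm hvw huw avu avw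
    rw [extCount_replaceVertex_of_ne hwA huw, extCount_replaceVertex_of_ne hwA hvw] at h
    exact hv (h (hu ▸ hv)).symm
  · exact hG.extCount_eq_of_ne_zero huv huw hvw auv auw hu

lemma numOrient_deleteEdges_eq [Finite V] (hG : MaximizesOrient G F) (huv : u ≠ v)
    (huw : u ≠ w) (hvw : v ≠ w) (auv : ¬ G.Adj u v) (auw : ¬ G.Adj u w) :
    numOrient (G.deleteEdges {s(v, w)}) F = numOrient G F := by
  have := Fintype.ofFinite V
  have hv : v ∉ ({u, v, w}ᶜ : Set V) := by simp
  have avw : ¬ (G.replaceVertex u v).Adj v w := by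
    rwa [G.adj_replaceVertex_iff_of_ne_right u hvw.symm]
  have auw' : ¬ (G.replaceVertex u v).Adj u w := by
    rwa [G.adj_replaceVertex_iff_of_ne_left u hvw.symm]
  rw [← hG.numOrient_replaceVertex_eq huv auv,
    numOrient_eq_sum_mul_mul huv huw hvw (G.not_adj_replaceVertex_same u v) auw' avw,
    numOrient_eq_sum_mul_mul huv huw hvw (by simp [auv]) (by simp [auw]) (by simp)]
  refine Finset.sum_congr rfl fun R _ => ?_
  rw [extCount_deleteEdges (by simp [huv.symm]), extCount_deleteEdges (by simp [hvw.symm]),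
    extCount_deleteEdges (by simp [hvw]), extCount_replaceVertex_of_ne hv huv,
    extCount_replaceVertex (by simp) hv, extCount_replaceVertex_of_ne hv hvw.symm,
    hG.extCount_eq_of_not_adj huv huw hvw auv auw]

end MaximizesOrient

theorem isExtremal_deleteEdge_general [Finite V] (G : SimpleGraph V) (F : TournFamily)
    (hG : MaximizesOrient G F) (u v w : V) (huv : u ≠ v) (huw : u ≠ w) (hvw : v ≠ w)
    (auv : ¬ G.Adj u v) (auw : ¬ G.Adj u w) :
    MaximizesOrient (G.deleteEdges {s(v, w)}) F ∧
    ∀ H : (G.induce ({u, v, w} : Set V)ᶜ).Orient,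
      extVert G F ({u, v, w} : Set V)ᶜ u H = extVert G F ({u, v, w} : Set V)ᶜ w H ∧
      extVert G F ({u, v, w} : Set V)ᶜ w H = extVert G F ({u, v, w} : Set V)ᶜ v H := by
  have := Fintype.ofFinite V
  have hdelete := hG.numOrient_deleteEdges_eq huv huw hvw auv auw
  refine ⟨fun K => (hG K).trans_eq hdelete.symm, fun H => ?_⟩
  have hv := hG.extCount_eq_of_not_adj huv huw hvw auv auw (Relation.Map H.1 (↑) (↑))
  have hw := hG.extCount_eq_of_not_adj huw huv hvw.symm auw auv (Relation.Map H.1 (↑) (↑))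
  rw [Set.pair_comm w v] at hw
  simp only [extVert_eq_extCount]
  exact ⟨hw.symm, hw.trans hv.symm⟩

/-- If `G` is `F`-extremal and `u, v, w` are distinct vertices with `uv, uw ∉ E(G)` and
`vw ∈ E(G)`, then the graph obtained from `G` by deleting the edge `vw` is also
`F`-extremal, and moreover, with `H = G - {u, v, w}`, the vectors `u⃗_{H,F}`,
`v⃗_{H,F}` and `w⃗_{H,F}` are all equal. -/
theorem isExtremal_deleteEdge {n : ℕ} (G : SimpleGraph (Fin n)) (F : TournFamily)
    (hG : IsExtremal G F) (u v w : Fin n) (huv : u ≠ v) (huw : u ≠ w) (hvw : v ≠ w)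
    (h1 : ¬ G.Adj u v) (h2 : ¬ G.Adj u w) (h3 : G.Adj v w) :
    IsExtremal (G.deleteEdges {s(v, w)}) F ∧
    ∀ H : (G.induce ({u, v, w} : Set (Fin n))ᶜ).Orient, FreeOrient F H →
      extVert G F ({u, v, w} : Set (Fin n))ᶜ u H =
        extVert G F ({u, v, w} : Set (Fin n))ᶜ w H ∧
      extVert G F ({u, v, w} : Set (Fin n))ᶜ w H =
        extVert G F ({u, v, w} : Set (Fin n))ᶜ v H := by
  have h := isExtremal_deleteEdge_general G F hG u v w huv huw hvw h1 h2
  exact ⟨h.1, fun H _ => h.2 H⟩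
end
end

section
/- Let k ≥ 4 be an integer, let G be a graph, let K be a complete subgraph of G with x vertices where x ∈ {k−1, k, k+1}, and let u be a vertex in V(G) \ V(K) adjacent to all vertices of K. Then for any orientation K⃗ of K, the number c_{𝓢_k}(u, K⃗) of ways to orient the edges between u and V(K) so that the resulting orientation of G[V(K) ∪ {u}] contains no strongly connected tournament on k vertices satisfies c_{𝓢_k}(u, K⃗) ≤ (x − k + 4)·2^{k−3}. -/
open scoped Classical

noncomputable section

universe u

variable {V : Type u}

/-!
List the vertices of `K` along a Hamiltonian directed path `v₁ → ⋯ → vₓ`. If `u → vᵢ` and `vⱼ → u`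
with `j - i ≥ k - 2`, then the cycle `u → vᵢ → ⋯ → vⱼ → u` spans a strong tournament on at least `k`
vertices, which by Moon's theorem contains a strong tournament on exactly `k` vertices. So in an
`𝓢 k`-free extension an edge out of `u` forces every edge at least `k - 2` places later on the path
to leave `u` as well. If the first edge leaves `u`, only the next `k - 3` edges are free, which
leaves at most `2 ^ (k - 3)` patterns; otherwise drop `v₁` and induct.
-/

section StronglyConnectedOn

variable {α : Type*} {R : α → α → Prop}

/-- Reachability by a directed path of `R` inside `S`. The trivial path at a vertex outside `S` is
allowed. -/
abbrev ReachableIn (R : α → α → Prop) (S : Set α) : α → α → Prop :=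
  Relation.ReflTransGen fun a b => R a b ∧ a ∈ S ∧ b ∈ S

/-- The digraph `R` induces a strongly connected digraph on `S`. -/
def StronglyConnectedOn (R : α → α → Prop) (S : Set α) : Prop :=
  ∀ a ∈ S, ∀ b ∈ S, ReachableIn R S a b

theorem ReachableIn.mono {S T : Set α} (hST : S ⊆ T) {a b : α} (h : ReachableIn R S a b) :
    ReachableIn R T a b :=
  Relation.ReflTransGen.mono (fun _ _ h => ⟨h.1, hST h.2.1, hST h.2.2⟩) _ _ h

theorem ReachableIn.exists_rel_mem_notMem {S U : Set α} {a b : α} (h : ReachableIn R S a b)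
    (ha : a ∈ U) (hb : b ∉ U) : ∃ x ∈ S ∩ U, ∃ y ∈ S \ U, R x y := by
  induction h with
  | refl => exact absurd ha hb
  | @tail x y _ hxy ih =>
    by_cases hx : x ∈ U
    · exact ⟨x, ⟨hxy.2.1, hx⟩, y, ⟨hxy.2.2, hb⟩, hxy.1⟩
    · exact ih hx

namespace StronglyConnectedOn

theorem of_hub {S : Set α} (c : α)
    (hc : ∀ a ∈ S, ReachableIn R S a c ∧ ReachableIn R S c a) : StronglyConnectedOn R S :=
  fun a ha b hb => (hc a ha).1.trans (hc b hb).2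

theorem insert_of_rel {S : Set α} (hS : StronglyConnectedOn R S) {a b v : α} (ha : a ∈ S)
    (hb : b ∈ S) (hav : R a v) (hvb : R v b) : StronglyConnectedOn R (insert v S) := by
  have hsub : S ⊆ insert v S := Set.subset_insert v S
  have hv : v ∈ insert v S := Set.mem_insert v S
  refine of_hub v ?_
  rintro c (rfl | hc)
  · exact ⟨.refl, .refl⟩
  · have hav' : ReachableIn R (insert v S) a v := .single ⟨hav, hsub ha, hv⟩
    have hvb' : ReachableIn R (insert v S) v b := .single ⟨hvb, hv, hsub hb⟩
    exact ⟨((hS c hc a ha).mono hsub).trans hav', hvb'.trans ((hS b hb c hc).mono hsub)⟩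

theorem insert_insert_of_rel {S : Set α} (hS : S.Nonempty) {o i : α} (ho : ∀ b ∈ S, R b o)
    (hoi : R o i) (hi : ∀ b ∈ S, R i b) : StronglyConnectedOn R (insert o (insert i S)) := by
  set T := insert o (insert i S) with hT
  have hoT : o ∈ T := by simp [hT]
  have hiT : i ∈ T := by simp [hT]
  have hST : ∀ b ∈ S, b ∈ T := fun b hb => by simp [hT, hb]
  have hSo : ∀ b ∈ S, ReachableIn R T b o := fun b hb => .single ⟨ho b hb, hST b hb, hoT⟩
  have hiS : ∀ b ∈ S, ReachableIn R T i b := fun b hb => .single ⟨hi b hb, hiT, hST b hb⟩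
  have hoi' : ReachableIn R T o i := .single ⟨hoi, hoT, hiT⟩
  obtain ⟨c, hc⟩ := hS
  refine of_hub o ?_
  rintro b (rfl | rfl | hb)
  · exact ⟨.refl, .refl⟩
  · exact ⟨(hiS c hc).trans (hSo c hc), hoi'⟩
  · exact ⟨hSo b hb, hoi'.trans (hiS b hb)⟩

theorem insert_image_Icc {ι : Type*} [LinearOrder ι] [SuccOrder ι] [IsSuccArchimedean ι]
    {f : ι → α} (hf : ∀ a b, a ⋖ b → R (f a) (f b)) {i j : ι} (hij : i ≤ j) {u : α}
    (hui : R u (f i)) (hju : R (f j) u) :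
    StronglyConnectedOn R (insert u (f '' Set.Icc i j)) := by
  set S := insert u (f '' Set.Icc i j)
  have hu : u ∈ S := Set.mem_insert _ _
  have hmem : ∀ a ∈ Set.Icc i j, f a ∈ S := fun a ha => .inr ⟨a, ha, rfl⟩
  have hpath : ∀ a ∈ Set.Icc i j, ∀ b ∈ Set.Icc i j, a ≤ b → ReachableIn R S (f a) (f b) := by
    intro a ha b hb hab
    refine Relation.ReflTransGen.lift f (fun _ _ h => h) _ _
      (reflTransGen_of_succ_of_le (fun x y => R (f x) (f y) ∧ f x ∈ S ∧ f y ∈ S) ?_ hab)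
    intro c hc
    have hsucc : Order.succ c ≤ b := Order.succ_le_of_lt hc.2
    exact ⟨hf _ _ (Order.covBy_succ_of_not_isMax hc.2.not_isMax),
      hmem c ⟨ha.1.trans hc.1, hc.2.le.trans hb.2⟩,
      hmem _ ⟨(ha.1.trans hc.1).trans (Order.le_succ c), hsucc.trans hb.2⟩⟩
  have hi : i ∈ Set.Icc i j := Set.left_mem_Icc.2 hij
  have hj : j ∈ Set.Icc i j := Set.right_mem_Icc.2 hij
  refine of_hub u ?_
  rintro _ (rfl | ⟨a, ha, rfl⟩)
  · exact ⟨.refl, .refl⟩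
  · exact ⟨(hpath a ha j hj ha.2).trans (.single ⟨hju, hmem j hj, hu⟩),
      (hpath i hi a ha ha.1).head ⟨hui, hu, hmem i hi⟩⟩

theorem exists_dominated_rel_dominating {A B : Set α} (hA : StronglyConnectedOn R A)
    (hR : A.Pairwise fun a b => R a b ∨ R b a) (hBA : B ⊂ A) (hB : B.Nonempty)
    (hmixed : ∀ v ∈ A \ B, ¬ ((∃ b ∈ B, R b v) ∧ ∃ b ∈ B, R v b)) :
    ∃ o ∈ A \ B, ∃ i ∈ A \ B, (∀ b ∈ B, R b o) ∧ R o i ∧ ∀ b ∈ B, R i b := by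
  have htot : ∀ v ∈ A \ B, ∀ b ∈ B, R v b ∨ R b v := fun v hv b hb =>
    hR hv.1 (hBA.subset hb) fun h => hv.2 (h ▸ hb)
  obtain ⟨c, hcB⟩ := hB
  obtain ⟨d, hdA, hdB⟩ := Set.exists_of_ssubset hBA
  have hcA := hBA.subset hcB
  obtain ⟨b, ⟨-, hb⟩, v, hv, hbv⟩ := (hA c hcA d hdA).exists_rel_mem_notMem hcB hdB
  have hdom : ∀ b ∈ B, R b v := fun w hw =>
    (htot v hv w hw).resolve_left fun h => hmixed v hv ⟨⟨b, hb, hbv⟩, w, hw, h⟩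
  -- The path back from `v` to `B` must leave the set of vertices dominated by `B`.
  obtain ⟨o, ⟨-, hoAB, ho⟩, i, ⟨hiA, hiU⟩, hoi⟩ := (hA v hv.1 c hcA).exists_rel_mem_notMem
    (U := {v | v ∈ A \ B ∧ ∀ b ∈ B, R b v}) ⟨hv, hdom⟩ fun h => h.1.2 hcB
  have hiB : i ∉ B := fun hi => hmixed o hoAB ⟨⟨c, hcB, ho c hcB⟩, i, hi, hoi⟩
  obtain ⟨b', hb', hb'i⟩ : ∃ b ∈ B, ¬ R b i := by
    by_contra! h
    exact hiU ⟨⟨hiA, hiB⟩, h⟩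
  have hib' := (htot i ⟨hiA, hiB⟩ b' hb').resolve_right hb'i
  refine ⟨o, hoAB, i, ⟨hiA, hiB⟩, ho, hoi, fun b hb => ?_⟩
  exact (htot i ⟨hiA, hiB⟩ b hb).resolve_right fun h =>
    hmixed i ⟨hiA, hiB⟩ ⟨⟨b, hb, h⟩, b', hb', hib'⟩

theorem exists_subset_card_succ {A B : Finset α} (hA : StronglyConnectedOn R (A : Set α))
    (hR : (A : Set α).Pairwise fun a b => R a b ∨ R b a)
    (hB : StronglyConnectedOn R (B : Set α)) (hBA : B ⊂ A) (htwo : 2 ≤ B.card) :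
    ∃ C ⊆ A, C.card = B.card + 1 ∧ StronglyConnectedOn R (C : Set α) := by
  by_cases hmixed : ∃ v ∈ (A : Set α) \ B, (∃ b ∈ B, R b v) ∧ ∃ b ∈ B, R v b
  · obtain ⟨v, hv, ⟨a, ha, hav⟩, b, hb, hvb⟩ := hmixed
    refine ⟨insert v B, Finset.insert_subset hv.1 hBA.subset, Finset.card_insert_of_notMem hv.2, ?_⟩
    rw [Finset.coe_insert]
    exact hB.insert_of_rel ha hb hav hvb
  · -- No single vertex can be added, so trade a vertex `c` of `B` for both ends of an edge `o → i`.
    push Not at hmixed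
    obtain ⟨c, hc⟩ : B.Nonempty := Finset.card_pos.1 (by omega)
    obtain ⟨o, ho, i, hi, hBo, hoi, hiB⟩ := hA.exists_dominated_rel_dominating hR
      (Finset.coe_ssubset.2 hBA) ⟨c, hc⟩ fun v hv h => by grind
    have hne : o ≠ i := by rintro rfl; exact hmixed o ho ⟨c, hc, hBo c hc⟩ c hc (hiB c hc)
    refine ⟨insert o (insert i (B.erase c)), by grind, by grind, ?_⟩
    simp only [Finset.coe_insert]
    refine insert_insert_of_rel ?_ (fun b hb => hBo b (Finset.mem_of_mem_erase hb)) hoi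
      fun b hb => hiB b (Finset.mem_of_mem_erase hb)
    exact Finset.card_pos.1 (by grind)

theorem exists_subset_card_eq_three [Std.Asymm R] {A : Finset α}
    (hA : StronglyConnectedOn R (A : Set α))
    (hR : (A : Set α).Pairwise fun a b => R a b ∨ R b a) (hcard : 1 < A.card) :
    ∃ C ⊆ A, C.card = 3 ∧ StronglyConnectedOn R (C : Set α) := by
  obtain ⟨a, ha, b, hb, hab⟩ := Finset.one_lt_card.1 hcard
  have hsub : ({a} : Set α) ⊂ A :=
    (Set.ssubset_iff_of_subset (Set.singleton_subset_iff.2 ha)).2 ⟨b, hb, Ne.symm hab⟩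
  obtain ⟨o, ho, i, hi, hao, hoi, hia⟩ := hA.exists_dominated_rel_dominating hR hsub
    (Set.singleton_nonempty a) fun v _ h => by
      obtain ⟨⟨_, rfl, hav⟩, _, rfl, hva⟩ := h
      exact Std.Asymm.asymm _ _ hav hva
  have hne : o ≠ i := by rintro rfl; exact Std.Asymm.asymm _ _ hoi hoi
  refine ⟨{o, i, a}, by grind, Finset.card_eq_three.2 ⟨o, i, a, hne, ho.2, hi.2, rfl⟩, ?_⟩
  simp only [Finset.coe_insert, Finset.coe_singleton]
  exact insert_insert_of_rel (Set.singleton_nonempty a) hao hoi hia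

-- Moon's theorem on the cycle lengths of strong tournaments.
theorem exists_subset_card_eq [Std.Asymm R] {A : Finset α}
    (hA : StronglyConnectedOn R (A : Set α))
    (hR : (A : Set α).Pairwise fun a b => R a b ∨ R b a) {k : ℕ} (hk : 3 ≤ k) (hkA : k ≤ A.card) :
    ∃ C ⊆ A, C.card = k ∧ StronglyConnectedOn R (C : Set α) := by
  induction k, hk using Nat.le_induction with
  | base => exact hA.exists_subset_card_eq_three hR (by omega)
  | succ k hk ih =>
    obtain ⟨B, hBA, rfl, hB⟩ := ih (by omega)
    have hss : B ⊂ A := Finset.ssubset_iff_subset_ne.2 ⟨hBA, by rintro rfl; omega⟩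
    exact hA.exists_subset_card_succ hR hB hss (by omega)

end StronglyConnectedOn

end StronglyConnectedOn

section Orientation

theorem asymm_of_orient {G : SimpleGraph V} (D : G.Orient) : Std.Asymm D.1 :=
  ⟨fun a b hab => (D.2.2 a b (D.2.1 a b hab)).1 hab⟩

theorem orient_or_orient_of_adj {G : SimpleGraph V} (D : G.Orient) {a b : V} (h : G.Adj a b) :
    D.1 a b ∨ D.1 b a :=
  (em (D.1 b a)).symm.imp_left (D.2.2 a b h).2

theorem FreeOrient.not_stronglyConnectedOn {G : SimpleGraph V} {D : G.Orient} {S : Finset V}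
    (hD : FreeOrient (SFam S.card) D) (hS : G.IsClique (S : Set V)) :
    ¬ StronglyConnectedOn D.1 (S : Set V) := by
  intro hconn
  let φ : Fin S.card ≃ S := S.equivFin.symm
  have hinj : Function.Injective fun i => (φ i : V) := Subtype.val_injective.comp φ.injective
  let T : (⊤ : SimpleGraph (Fin S.card)).Orient :=
    ⟨fun i j => D.1 (φ i) (φ j),
      fun i j h => fun hij => (D.2.1 _ _ h).ne (congrArg (fun l => (φ l : V)) hij),
      fun i j hij => D.2.2 _ _ (hS (φ i).2 (φ j).2 (hinj.ne hij))⟩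
  refine hD S.card T ⟨rfl, fun i j => ?_⟩ ⟨fun i => φ i, hinj, fun _ _ h => h⟩
  have : Nonempty (Fin S.card) := ⟨i⟩
  have hinv : ∀ x ∈ S, (φ (Function.invFun (fun i => (φ i : V)) x) : V) = x := fun x hx =>
    Function.invFun_eq (f := fun i => (φ i : V))
      ⟨φ.symm ⟨x, hx⟩, congrArg Subtype.val (φ.apply_symm_apply _)⟩
  simpa only [Function.onFun, Function.leftInverse_invFun hinj _] using
    Relation.ReflTransGen.lift (p := T.1) (Function.invFun fun i => (φ i : V))
      (fun x y h => by simpa only [Function.onFun, T, hinv x h.2.1, hinv y h.2.2] using h.1) _ _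
      (hconn (φ i) (φ i).2 (φ j) (φ j).2)

theorem FreeOrient.card_lt_of_stronglyConnectedOn {G : SimpleGraph V} {k : ℕ} (hk : 3 ≤ k)
    {D : G.Orient} (hD : FreeOrient (SFam k) D) {S : Finset V} (hS : G.IsClique (S : Set V))
    (hconn : StronglyConnectedOn D.1 (S : Set V)) : S.card < k := by
  by_contra! hkS
  have := asymm_of_orient D
  obtain ⟨C, hCS, rfl, hC⟩ := hconn.exists_subset_card_eq
    (fun a ha b hb hab => orient_or_orient_of_adj D (hS ha hb hab)) hk hkS
  exact hD.not_stronglyConnectedOn (hS.subset (Finset.coe_subset.2 hCS)) hC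

theorem orient_ext_of_insert {G : SimpleGraph V} {A : Set V} {v : V}
    {D D' : (G.induce (insert v A)).Orient}
    (hA : ∀ (a b : V) (ha : a ∈ A) (hb : b ∈ A),
      (D.1 ⟨a, Set.mem_insert_of_mem v ha⟩ ⟨b, Set.mem_insert_of_mem v hb⟩ ↔
        D'.1 ⟨a, Set.mem_insert_of_mem v ha⟩ ⟨b, Set.mem_insert_of_mem v hb⟩))
    (hv : ∀ (a : V) (ha : a ∈ A), (D.1 ⟨v, Set.mem_insert v A⟩ ⟨a, Set.mem_insert_of_mem v ha⟩ ↔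
        D'.1 ⟨v, Set.mem_insert v A⟩ ⟨a, Set.mem_insert_of_mem v ha⟩)) : D = D' := by
  refine Subtype.ext (funext₂ fun x y => propext ?_)
  by_cases hadj : (G.induce (insert v A)).Adj x y
  swap
  · exact iff_of_false (fun h => hadj (D.2.1 x y h)) fun h => hadj (D'.2.1 x y h)
  obtain ⟨a, rfl | ha⟩ := x <;> obtain ⟨b, rfl | hb⟩ := y
  · exact absurd rfl hadj.ne
  · exact hv b hb
  · rw [D.2.2 _ _ hadj, D'.2.2 _ _ hadj, hv a ha]
  · exact hA a b ha hb

end Orientation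

section HamiltonianPath

variable {α : Type*} {R : α → α → Prop}

theorem isChain_orderedInsert {a : α} {l : List α} (hl : l.IsChain R)
    (ha : ∀ b ∈ l, R a b ∨ R b a) : (l.orderedInsert R a).IsChain R := by
  induction l with
  | nil => simp
  | cons b l ih =>
    by_cases hab : R a b
    · rw [List.orderedInsert_cons_of_le _ _ hab]
      exact List.isChain_cons_cons.2 ⟨hab, hl⟩
    · rw [List.orderedInsert_of_not_le _ _ hab]
      have hba : R b a := (ha b List.mem_cons_self).resolve_left hab
      have htail := ih hl.tail fun c hc => ha c (List.mem_cons_of_mem b hc)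
      refine List.isChain_cons.2 ⟨fun c hc => ?_, htail⟩
      cases l with
      | nil => simp_all
      | cons d l =>
        have hbd : R b d := (List.isChain_cons_cons.1 hl).1
        rw [List.orderedInsert_cons] at hc
        split_ifs at hc <;> simp_all

-- Insertion sort yields a directed path without `R` being transitive: this is Rédei's theorem.
theorem isChain_insertionSort {l : List α} (hl : l.Pairwise fun a b => R a b ∨ R b a) :
    (l.insertionSort R).IsChain R := by
  induction l with
  | nil => simp
  | cons a l ih =>
    rw [List.pairwise_cons] at hl
    exact isChain_orderedInsert (ih hl.2) fun b hb => hl.1 b ((List.mem_insertionSort R).1 hb)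

theorem exists_equiv_fin_covBy_rel {n : ℕ} [Finite α] (hn : Nat.card α = n)
    (hR : Pairwise fun a b => R a b ∨ R b a) :
    ∃ e : Fin n ≃ α, ∀ i j, i ⋖ j → R (e i) (e j) := by
  have := Fintype.ofFinite α
  let l := (Finset.univ.toList : List α).insertionSort R
  have hperm : l.Perm Finset.univ.toList := List.perm_insertionSort R _
  have hchain : l.IsChain R :=
    isChain_insertionSort ((Finset.nodup_toList _).imp fun {a b} hab => hR hab)
  have hlen : l.length = n := by
    rw [hperm.length_eq, Finset.length_toList, Finset.card_univ, ← Nat.card_eq_fintype_card, hn]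
  subst hlen
  refine ⟨(hperm.nodup_iff.2 (Finset.nodup_toList _)).getEquivOfForallMemList l
    fun a => hperm.mem_iff.2 (by simp), fun i j hij => ?_⟩
  have hij' : (i : ℕ) + 1 = j := by simpa using hij
  have := List.isChain_iff_getElem.1 hchain i (by omega)
  simpa [hij'] using this

end HamiltonianPath

section FarDescent

/-- The Boolean sequence `s` has no `true` entry followed by a `false` entry more than `d` places
later. -/
def NoFarDescent (d : ℕ) {n : ℕ} (s : Fin n → Bool) : Prop :=
  ∀ i j : Fin n, (i : ℕ) + d < j → s i = true → s j = true

namespace NoFarDescent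

variable {d n : ℕ}

theorem tail {s : Fin (n + 1) → Bool} (hs : NoFarDescent d s) : NoFarDescent d (Fin.tail s) :=
  fun i j hij => hs i.succ j.succ (by simp only [Fin.val_succ]; omega)

theorem eq_of_head {s t : Fin (d + n + 1) → Bool} (hs : NoFarDescent d s) (ht : NoFarDescent d t)
    (hs0 : s 0 = true) (ht0 : t 0 = true)
    (hst : ∀ i : Fin d, Fin.tail s (i.castAdd n) = Fin.tail t (i.castAdd n)) : s = t := by
  have htail (i : Fin (d + n)) : Fin.tail s i = Fin.tail t i := by
    by_cases hi : (i : ℕ) < d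
    · exact hst ⟨i, hi⟩
    · have hfar : ((0 : Fin (d + n + 1)) : ℕ) + d < i.succ := by
        simp only [Fin.val_zero, Fin.val_succ]
        omega
      exact (hs 0 i.succ hfar hs0).trans (ht 0 i.succ hfar ht0).symm
  exact funext (Fin.cases (hs0.trans ht0.symm) htail)

theorem card_le (d n : ℕ) :
    Nat.card {s : Fin (d + n) → Bool // NoFarDescent d s} ≤ (n + 1) * 2 ^ d := by
  induction n with
  | zero => exact (Finite.card_subtype_le _).trans (by simp)
  | succ n ih =>
    let f (s : {s : Fin (d + n + 1) → Bool // NoFarDescent d s}) :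
        (Fin d → Bool) ⊕ {s : Fin (d + n) → Bool // NoFarDescent d s} :=
      if s.1 0 then .inl fun i => Fin.tail s.1 (i.castAdd n) else .inr ⟨Fin.tail s.1, s.2.tail⟩
    have hf : Function.Injective f := by
      rintro ⟨s, hs⟩ ⟨t, ht⟩ hst
      by_cases hs0 : s 0 = true <;> by_cases ht0 : t 0 = true
      · simp only [f, hs0, ht0, if_true, Sum.inl.injEq] at hst
        exact Subtype.ext (hs.eq_of_head ht hs0 ht0 (congrFun hst))
      · simp [f, hs0, ht0] at hst
      · simp [f, hs0, ht0] at hst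
      · have hhead : s 0 = t 0 := by simp_all
        simp only [f, hs0, ht0, Bool.false_eq_true, if_false, Sum.inr.injEq,
          Subtype.mk.injEq] at hst
        exact Subtype.ext (funext (Fin.cases hhead (congrFun hst)))
    calc Nat.card {s : Fin (d + n + 1) → Bool // NoFarDescent d s}
        ≤ Nat.card ((Fin d → Bool) ⊕ {s : Fin (d + n) → Bool // NoFarDescent d s}) :=
          Nat.card_le_card_of_injective f hf
      _ = 2 ^ d + Nat.card {s : Fin (d + n) → Bool // NoFarDescent d s} := by
          simp
      _ ≤ 2 ^ d + (n + 1) * 2 ^ d := Nat.add_le_add_left ih _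
      _ = (n + 1 + 1) * 2 ^ d := by ring

end NoFarDescent

theorem FreeOrient.noFarDescent {G : SimpleGraph V} {k n : ℕ} (hk : 3 ≤ k) {D : G.Orient}
    (hD : FreeOrient (SFam k) D) {u : V} {f : Fin n → V} (hf : Function.Injective f)
    (hu : u ∉ Set.range f) (hclique : G.IsClique (insert u (Set.range f)))
    (hpath : ∀ i j, i ⋖ j → D.1 (f i) (f j)) :
    NoFarDescent (k - 3) fun i => decide (D.1 u (f i)) := by
  intro i j hij hui
  rw [decide_eq_true_eq] at hui ⊢
  by_contra huj
  have hadj : G.Adj u (f j) := hclique (Set.mem_insert _ _) (.inr ⟨j, rfl⟩) fun h => hu ⟨j, h.symm⟩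
  have hju : D.1 (f j) u := (orient_or_orient_of_adj D hadj).resolve_left huj
  let cycle : Finset V := insert u ((Finset.Icc i j).image f)
  have hconn : StronglyConnectedOn D.1 (cycle : Set V) := by
    have hle : i ≤ j := Fin.le_def.2 (by omega)
    simpa only [cycle, Finset.coe_insert, Finset.coe_image, Finset.coe_Icc] using
      StronglyConnectedOn.insert_image_Icc hpath hle hui hju
  have hsub : (cycle : Set V) ⊆ insert u (Set.range f) := by
    simpa [cycle] using Set.insert_subset_insert (Set.image_subset_range f _)
  have hcard : cycle.card = j - i + 2 := by
    rw [Finset.card_insert_of_notMem fun h => hu (by grind), Finset.card_image_of_injective _ hf,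
      Fin.card_Icc]
    omega
  have := hD.card_lt_of_stronglyConnectedOn hk (hclique.subset hsub) hconn
  omega

end FarDescent

theorem extVert_le_card_of_surjective {G : SimpleGraph V} {F : TournFamily} {A : Set V} {v : V}
    {H : (G.induce A).Orient} {ι : Type*} [Finite ι] {f : ι → A} (hf : Function.Surjective f)
    {P : (ι → Bool) → Prop}
    (hP : ∀ D : (G.induce (insert v A)).Orient, FreeOrient F D →
      (∀ a b : A, D.1 ⟨a, Set.mem_insert_of_mem v a.2⟩ ⟨b, Set.mem_insert_of_mem v b.2⟩ ↔ H.1 a b) →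
      P fun i => decide (D.1 ⟨v, Set.mem_insert v A⟩ ⟨f i, Set.mem_insert_of_mem v (f i).2⟩)) :
    extVert G F A v H ≤ Nat.card {s : ι → Bool // P s} := by
  refine Nat.card_le_card_of_injective
    (fun D => ⟨_, hP D.1 D.2.1 fun a b => D.2.2 a b a.2 b.2⟩) fun D D' h => Subtype.ext ?_
  refine orient_ext_of_insert
    (fun a b ha hb => (D.2.2 a b ha hb).trans (D'.2.2 a b ha hb).symm) fun a ha => ?_
  obtain ⟨i, hi⟩ := hf ⟨a, ha⟩
  simpa only [hi, decide_eq_decide] using congrFun (congrArg Subtype.val h) i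

theorem extVert_le_of_clique_general (G : SimpleGraph V) {k : ℕ} (hk : 3 ≤ k)
    (K : Finset V) (hkK : k ≤ K.card + 3) (hK : G.IsClique (K : Set V)) (u : V) (hu : u ∉ K)
    (hadj : ∀ w ∈ K, G.Adj u w) (T : (G.induce (K : Set V)).Orient) :
    extVert G (SFam k) (K : Set V) u T ≤ (K.card + 4 - k) * 2 ^ (k - 3) := by
  obtain ⟨m, hm⟩ : ∃ m, K.card = k - 3 + m := ⟨K.card - (k - 3), by omega⟩
  obtain ⟨e, hpath⟩ := exists_equiv_fin_covBy_rel (R := T.1) (n := k - 3 + m) (by simpa using hm)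
    fun a b hab => orient_or_orient_of_adj T (hK a.2 b.2 (Subtype.coe_ne_coe.2 hab))
  have hclique : (G.induce (insert u (K : Set V))).IsClique Set.univ := fun a _ b _ hab =>
    hK.insert (fun w hw _ => hadj w hw) a.2 b.2 (Subtype.coe_ne_coe.2 hab)
  calc extVert G (SFam k) (K : Set V) u T
      ≤ Nat.card {s : Fin (k - 3 + m) → Bool // NoFarDescent (k - 3) s} := by
        refine extVert_le_card_of_surjective e.surjective fun D hD hext => ?_
        refine hD.noFarDescent hk
          ((Set.inclusion_injective (Set.subset_insert u (K : Set V))).comp e.injective) ?_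
          (hclique.subset (Set.subset_univ _)) fun i j hij => (hext _ _).2 (hpath i j hij)
        rintro ⟨i, hi⟩
        have hiu : (e i : V) = u := congrArg Subtype.val hi
        exact hu (hiu ▸ (e i).2)
    _ ≤ (m + 1) * 2 ^ (k - 3) := NoFarDescent.card_le (k - 3) m
    _ = (K.card + 4 - k) * 2 ^ (k - 3) := by
        congr 1
        omega

/-- If `K` is a clique of `G` with `x ∈ {k-1, k, k+1}` vertices and `u ∉ K` is adjacent
to all vertices of `K`, then for any orientation `K⃗` of `K` the number of ways to
orient the edges between `u` and `K` avoiding a strongly connected tournament on `k`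
vertices is at most `(x - k + 4) · 2 ^ (k - 3)`. -/
theorem extVert_le_of_clique {n : ℕ} (G : SimpleGraph (Fin n)) (k x : ℕ) (hk : 4 ≤ k)
    (hx : x = k - 1 ∨ x = k ∨ x = k + 1)
    (K : Finset (Fin n)) (hK : G.IsClique ↑K) (hcard : K.card = x)
    (u : Fin n) (hu : u ∉ K) (hadj : ∀ w ∈ K, G.Adj u w)
    (T : (G.induce (↑K : Set (Fin n))).Orient) :
    extVert G (SFam k) (↑K : Set (Fin n)) u T ≤ (x + 4 - k) * 2 ^ (k - 3) := by
  subst hcard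
  exact extVert_le_of_clique_general G (by omega) K (by omega) hK u hu hadj T
end
end

section
/- Let k ≥ 4 be an integer, let G be a graph, let K be a complete subgraph of G with k−1 vertices, and let u, v be adjacent vertices in V(G) \ V(K) that are each adjacent to all vertices of K. Then for any orientation K⃗ of K, the number c_{𝓢_k}({u,v}, K⃗) of ways to orient the edge {u,v} together with all edges between {u,v} and V(K) so that the resulting orientation of G[V(K) ∪ {u,v}] contains no strongly connected tournament on k vertices satisfies c_{𝓢_k}({u,v}, K⃗) ≤ 6·2^{2k−5}. -/
open scoped Classical

noncomputable section

universe u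

variable {V : Type u}

/-- `c_F({u,v}, H⃗)`: the number of ways to orient the edge `uv` together with the
edges of `G` between `{u, v}` and `A` so that the resulting orientation of the induced
subgraph on `A ∪ {u, v}`, extending the orientation `H` of the induced subgraph on `A`,
is `F`-free. -/
def extEdge (G : SimpleGraph V) (F : TournFamily) (A : Set V) (u v : V)
    (H : (G.induce A).Orient) : ℕ :=
  Nat.card {D : (G.induce (insert u (insert v A))).Orient // FreeOrient F D ∧
    ∀ (a b : V) (ha : a ∈ A) (hb : b ∈ A),
      (D.1 ⟨a, Set.mem_insert_of_mem u (Set.mem_insert_of_mem v ha)⟩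
        ⟨b, Set.mem_insert_of_mem u (Set.mem_insert_of_mem v hb)⟩ ↔
        H.1 ⟨a, ha⟩ ⟨b, hb⟩)}

/-! Write `α` for the vertex set of `K`, `m = k - 1` for its size, and fix the direction `p → q` of
the edge `uv`. An extension is determined by the out-neighbourhoods `P` and `Q` of `p` and `q` in
`α`, so it suffices that at most `3/8` of the `4 ^ m` pairs `(P, Q)` are allowed.

* A vertex that sends an edge to an initial vertex of `α` and receives one from a terminal vertex
  closes a strongly connected tournament on `k` vertices. If there is no source, then there are at
  least three initial vertices, and this alone leaves a proportion of at most `9/16` for each of `P`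
  and `Q`; and `(9/16) ^ 2 ≤ 3/8`. The case without a sink is dual.
* If there are a source `s` and a sink `t`, this leaves only `3/4` for each. The gain comes from
  cycles through `p → q` and `α` minus one vertex. With `a` initial in `α \ {s}` and `c` terminal in
  `α \ {t}`, the pairs with `s ∈ Q`, those with `s ∉ Q`, `a ∈ Q`, and those with `s, a ∉ Q`
  have proportions at most `1/16`, `1/8` and `3/16`. -/

/-- Reachability by directed walks of `R` that stay inside `S`. -/
def ReachIn {α : Type*} (R : α → α → Prop) (S : Finset α) : α → α → Prop :=
  Relation.ReflTransGen fun a b => a ∈ S ∧ b ∈ S ∧ R a b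

/-- When `R` is a tournament, `x` is a vertex of the initial strong component of `S`. -/
def IsInitialIn {α : Type*} (R : α → α → Prop) (S : Finset α) (x : α) : Prop :=
  x ∈ S ∧ ∀ y ∈ S, ReachIn R S x y

/-- When `R` is a tournament, `y` is a vertex of the terminal strong component of `S`. -/
def IsTerminalIn {α : Type*} (R : α → α → Prop) (S : Finset α) (y : α) : Prop :=
  y ∈ S ∧ ∀ x ∈ S, ReachIn R S x y

/-- Strong connectivity of `R` on `S`, as `IsStrongTourn` but for subsets. -/
def StrongOn {α : Type*} (R : α → α → Prop) (S : Finset α) : Prop :=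
  ∀ x ∈ S, ∀ y ∈ S, ReachIn R S x y

section Reachability

open Finset Function

variable {α β : Type*} {R : α → α → Prop} {S S' : Finset α} {x y z : α}

theorem ReachIn.refl (x : α) : ReachIn R S x x :=
  Relation.ReflTransGen.refl

theorem ReachIn.single (hx : x ∈ S) (hy : y ∈ S) (h : R x y) : ReachIn R S x y :=
  Relation.ReflTransGen.single ⟨hx, hy, h⟩

theorem ReachIn.trans (hxy : ReachIn R S x y) (hyz : ReachIn R S y z) : ReachIn R S x z :=
  Relation.ReflTransGen.trans hxy hyz

theorem ReachIn.mono (hS : S ⊆ S') (h : ReachIn R S x y) : ReachIn R S' x y :=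
  Relation.ReflTransGen.mono (fun _ _ hab => ⟨hS hab.1, hS hab.2.1, hab.2.2⟩) _ _ h

theorem ReachIn.map {Q : β → β → Prop} (f : α ↪ β) (hf : ∀ a b, R a b → Q (f a) (f b))
    (h : ReachIn R S x y) : ReachIn Q (S.map f) (f x) (f y) :=
  Relation.ReflTransGen.lift f (fun a b hab => ⟨mem_map_of_mem f hab.1,
    mem_map_of_mem f hab.2.1, hf a b hab.2.2⟩) _ _ h

theorem ReachIn.swap (h : ReachIn R S x y) : ReachIn (swap R) S y x :=
  Relation.ReflTransGen.mono (fun _ _ hab => ⟨hab.2.1, hab.1, hab.2.2⟩) _ _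
    (Relation.reflTransGen_swap.2 h)

theorem isTerminalIn_swap : IsTerminalIn (swap R) S x ↔ IsInitialIn R S x :=
  and_congr_right fun _ => forall₂_congr fun _ _ => ⟨.swap, .swap⟩

theorem isInitialIn_swap : IsInitialIn (swap R) S x ↔ IsTerminalIn R S x :=
  isTerminalIn_swap.symm

theorem IsInitialIn.map {Q : β → β → Prop} (f : α ↪ β) (hf : ∀ a b, R a b → Q (f a) (f b))
    (hx : IsInitialIn R S x) : IsInitialIn Q (S.map f) (f x) :=
  ⟨mem_map_of_mem f hx.1, forall_mem_map.2 fun y hy => (hx.2 y hy).map f hf⟩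

theorem IsTerminalIn.map {Q : β → β → Prop} (f : α ↪ β) (hf : ∀ a b, R a b → Q (f a) (f b))
    (hy : IsTerminalIn R S y) : IsTerminalIn Q (S.map f) (f y) :=
  ⟨mem_map_of_mem f hy.1, forall_mem_map.2 fun x hx => (hy.2 x hx).map f hf⟩

theorem IsInitialIn.of_rel (hx : IsInitialIn R S x) (hy : y ∈ S) (hyx : R y x) :
    IsInitialIn R S y :=
  ⟨hy, fun z hz => (ReachIn.single hy hx.1 hyx).trans (hx.2 z hz)⟩

theorem IsInitialIn.strongOn (hi : IsInitialIn R S x) (ht : IsTerminalIn R S x) : StrongOn R S :=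
  fun a ha b hb => (ht.2 a ha).trans (hi.2 b hb)

theorem StrongOn.isInitialIn (h : StrongOn R S) (hx : x ∈ S) : IsInitialIn R S x :=
  ⟨hx, h x hx⟩

theorem StrongOn.isTerminalIn (h : StrongOn R S) (hy : y ∈ S) : IsTerminalIn R S y :=
  ⟨hy, fun x hx => h x hx y hy⟩

section Insert

variable [DecidableEq α]

theorem isInitialIn_insert (hx : IsInitialIn R S x) (hzx : R z x) :
    IsInitialIn R (insert z S) z := by
  refine ⟨mem_insert_self z S, (forall_mem_insert ..).2 ⟨.refl z, fun y hy => ?_⟩⟩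
  exact (ReachIn.single (mem_insert_self z S) (mem_insert_of_mem hx.1) hzx).trans
    ((hx.2 y hy).mono (subset_insert z S))

theorem isTerminalIn_insert (hy : IsTerminalIn R S y) (hyz : R y z) :
    IsTerminalIn R (insert z S) z :=
  isInitialIn_swap.1 (isInitialIn_insert (isInitialIn_swap.2 hy) hyz)

theorem IsTerminalIn.insert_of_rel (hy : IsTerminalIn R S y) (hx : x ∈ S) (hzx : R z x) :
    IsTerminalIn R (insert z S) y := by
  have hsub : S ⊆ insert z S := subset_insert z S
  refine ⟨hsub hy.1, (forall_mem_insert ..).2 ⟨?_, fun w hw => (hy.2 w hw).mono hsub⟩⟩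
  exact (ReachIn.single (mem_insert_self z S) (hsub hx) hzx).trans ((hy.2 x hx).mono hsub)

theorem strongOn_insert (hx : IsInitialIn R S x) (hy : IsTerminalIn R S y) (hzx : R z x)
    (hyz : R y z) : StrongOn R (insert z S) :=
  (isInitialIn_insert hx hzx).strongOn (isTerminalIn_insert hy hyz)

theorem strongOn_insert_insert {p q : α} (hx : IsInitialIn R S x) (hy : IsTerminalIn R S y)
    (hqx : R q x) (hpq : R p q) (hyp : R y p) : StrongOn R (insert p (insert q S)) :=
  strongOn_insert (isInitialIn_insert hx hqx) (hy.insert_of_rel hx.1 hqx) hpq hyp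

end Insert

section Tournament

variable [Std.Trichotomous R]

theorem exists_isTerminalIn (hS : S.Nonempty) : ∃ y, IsTerminalIn R S y := by
  classical
  induction hS using Finset.Nonempty.cons_induction with
  | singleton a => exact ⟨a, by simp [IsTerminalIn, ReachIn.refl]⟩
  | cons a S ha _ ih =>
    obtain ⟨y, hy⟩ := ih
    rw [cons_eq_insert]
    rcases trichotomous_of R a y with hay | rfl | hya
    · exact ⟨y, hy.insert_of_rel hy.1 hay⟩
    · exact absurd hy.1 ha
    · exact ⟨a, isTerminalIn_insert hy hya⟩

theorem exists_isInitialIn (hS : S.Nonempty) : ∃ x, IsInitialIn R S x :=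
  (exists_isTerminalIn (R := swap R) hS).imp fun _ => isTerminalIn_swap.1

theorem isInitialIn_of_forall_not_rel (hx : ∀ y, ¬ R y x) (hxS : x ∈ S) : IsInitialIn R S x := by
  refine ⟨hxS, fun y hy => ?_⟩
  rcases trichotomous_of R x y with hxy | rfl | hyx
  · exact .single hxS hy hxy
  · exact .refl x
  · exact absurd hyx (hx y)

theorem isTerminalIn_of_forall_not_rel (hy : ∀ x, ¬ R y x) (hyS : y ∈ S) : IsTerminalIn R S y :=
  isInitialIn_swap.1 (isInitialIn_of_forall_not_rel (R := swap R) hy hyS)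

theorem two_lt_card_isInitialIn [Std.Asymm R] (hS : S.Nonempty)
    (hsource : ∀ x ∈ S, ∃ y ∈ S, R y x) : 2 < #{x ∈ S | IsInitialIn R S x} := by
  obtain ⟨a, ha⟩ := exists_isInitialIn (R := R) hS
  obtain ⟨b, hbS, hba⟩ := hsource a ha.1
  obtain ⟨c, hcS, hcb⟩ := hsource b hbS
  have hb := ha.of_rel hbS hba
  have hc := hb.of_rel hcS hcb
  refine two_lt_card.2 ⟨a, mem_filter.2 ⟨ha.1, ha⟩, b, mem_filter.2 ⟨hbS, hb⟩,
    c, mem_filter.2 ⟨hcS, hc⟩, ne_of_irrefl' hba, ?_, ne_of_irrefl' hcb⟩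
  rintro rfl
  exact asymm_of R hba hcb

end Tournament

end Reachability

section Cylinder

open Finset

variable {α : Type*} [Fintype α] [DecidableEq α] {A B P : Finset α}

/-- The event that a subset of `α` contains `A` and is disjoint from `B`; for disjoint `A` and `B`
its proportion among all subsets is `(1 / 2) ^ (#A + #B)`. -/
def cylinder (A B : Finset α) : Finset (Finset α) :=
  Icc A Bᶜ

theorem mem_cylinder : P ∈ cylinder A B ↔ A ⊆ P ∧ Disjoint P B := by
  rw [cylinder, mem_Icc, le_compl_iff_disjoint_right]

theorem two_pow_mul_card_cylinder (h : Disjoint A B) :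
    2 ^ (#A + #B) * #(cylinder A B) = 2 ^ Fintype.card α := by
  have hAB : A ⊆ Bᶜ := le_compl_iff_disjoint_right.2 h
  have hA := card_le_card hAB
  have hB := card_add_card_compl B
  rw [cylinder, card_Icc_finset hAB, ← pow_add]
  congr 1
  omega

end Cylinder

/-- No cycle leaves `S` from a terminal vertex, follows an outer walk and comes back at an initial
vertex, where `P` and `Q` are the out-neighbourhoods of the first and the last vertex of the walk.
Such a cycle would make the union of `S` and the walk strongly connected. -/
def AvoidsReturn {α : Type*} (R : α → α → Prop) (S P Q : Finset α) : Prop :=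
  ∀ x y, IsInitialIn R S x → IsTerminalIn R S y → x ∈ Q → y ∈ P

/-- The constraints used on the out-neighbourhoods `P` of `p` and `Q` of `q` when `R` is extended by
an edge `p → q` without strongly connected subtournaments on one vertex more than `R`. -/
structure IsStrongFreePair {α : Type*} [Fintype α] [DecidableEq α] (R : α → α → Prop)
    (P Q : Finset α) : Prop where
  left : AvoidsReturn R Finset.univ P P
  right : AvoidsReturn R Finset.univ Q Q
  through (r : α) : AvoidsReturn R (Finset.univ.erase r) P Q

section Counting

open Finset Function

variable {α : Type*} [Fintype α] {R : α → α → Prop} {S P Q : Finset α}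

theorem AvoidsReturn.compl_swap [DecidableEq α] (h : AvoidsReturn R S P Q) :
    AvoidsReturn (swap R) S Qᶜ Pᶜ := by
  intro x y hx hy
  simp only [mem_compl]
  exact mt (h y x (isTerminalIn_swap.1 hy) (isInitialIn_swap.1 hx))

theorem card_avoidsReturn_le_two (h : StrongOn R univ) :
    #{P | AvoidsReturn R univ P P} ≤ 2 := by
  classical
  suffices hsub : ({P | AvoidsReturn R univ P P} : Finset (Finset α)) ⊆ {∅, univ} from
    (card_le_card hsub).trans card_le_two
  intro P hP
  replace hP := (mem_filter.1 hP).2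
  rw [mem_insert, mem_singleton, or_iff_not_imp_left, ← ne_eq, ← nonempty_iff_ne_empty]
  rintro ⟨x, hx⟩
  exact eq_univ_of_forall fun y =>
    hP x y (h.isInitialIn (mem_univ x)) (h.isTerminalIn (mem_univ y)) hx

theorem card_avoidsReturn_le_of_not_isInitialIn {t : α} {I : Finset α}
    (ht : IsTerminalIn R univ t) (htI : t ∉ I) (hI : ∀ x ∈ I, IsInitialIn R univ x)
    (hcard : #I = 3) : 16 * #{P | AvoidsReturn R univ P P} ≤ 9 * 2 ^ Fintype.card α := by
  classical
  have hsub : ({P | AvoidsReturn R univ P P} : Finset (Finset α)) ⊆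
      cylinder {t} ∅ ∪ cylinder ∅ (insert t I) := by
    intro P hP
    replace hP := (mem_filter.1 hP).2
    rw [mem_union, mem_cylinder, mem_cylinder, or_iff_not_imp_left]
    intro htP
    replace htP : t ∉ P := by simpa using htP
    refine ⟨empty_subset P, (disjoint_insert_right ..).2 ⟨htP, disjoint_right.2 fun x hx hxP => ?_⟩⟩
    exact htP (hP x t (hI x hx) ht hxP)
  have hle := (card_le_card hsub).trans (card_union_le _ _)
  have ht := two_pow_mul_card_cylinder (disjoint_empty_right {t})
  have hI := two_pow_mul_card_cylinder (disjoint_empty_left (insert t I))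
  rw [card_insert_of_notMem htI, hcard, card_empty] at hI
  rw [card_singleton, card_empty] at ht
  omega

section Tournament

variable [Std.Trichotomous R] [Std.Asymm R]

theorem card_avoidsReturn_le_of_no_source [Nonempty α] (hsource : ∀ x, ∃ y, R y x) :
    16 * #{P | AvoidsReturn R univ P P} ≤ 9 * 2 ^ Fintype.card α := by
  have hthree := two_lt_card_isInitialIn (R := R) (univ_nonempty (α := α)) (by simpa using hsource)
  obtain ⟨I, hI, hcard⟩ := exists_subset_card_eq (Nat.succ_le_of_lt hthree)
  replace hI : ∀ x ∈ I, IsInitialIn R univ x := fun x hx => (mem_filter.1 (hI hx)).2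
  obtain ⟨t, ht⟩ := exists_isTerminalIn (R := R) (univ_nonempty (α := α))
  by_cases htI : t ∈ I
  · have htwo := card_avoidsReturn_le_two ((hI t htI).strongOn ht)
    have hpow : 2 ^ 3 ≤ 2 ^ Fintype.card α :=
      Nat.pow_le_pow_right two_pos (hcard.ge.trans (card_le_univ I))
    omega
  · exact card_avoidsReturn_le_of_not_isInitialIn ht htI hI hcard

theorem card_avoidsReturn_le_of_no_sink [Nonempty α] (hsink : ∀ y, ∃ x, R y x) :
    16 * #{P | AvoidsReturn R univ P P} ≤ 9 * 2 ^ Fintype.card α := by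
  classical
  refine le_trans ?_ (card_avoidsReturn_le_of_no_source (R := swap R) hsink)
  refine Nat.mul_le_mul_left 16 (card_le_card_of_injOn compl ?_ compl_injective.injOn)
  intro P hP
  exact mem_coe.2 (mem_filter.2 ⟨mem_univ _, (mem_filter.1 (mem_coe.1 hP)).2.compl_swap⟩)

end Tournament

section Pairs

variable [DecidableEq α]

theorem card_isStrongFreePair_le_of_card_avoidsReturn_le
    (h : 16 * #{P | AvoidsReturn R univ P P} ≤ 9 * 2 ^ Fintype.card α) :
    8 * #{PQ : Finset α × Finset α | IsStrongFreePair R PQ.1 PQ.2} ≤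
      3 * (2 ^ Fintype.card α) ^ 2 := by
  have hsub : ({PQ | IsStrongFreePair R PQ.1 PQ.2} : Finset (Finset α × Finset α)) ⊆
      ({P | AvoidsReturn R univ P P} : Finset _) ×ˢ ({Q | AvoidsReturn R univ Q Q} : Finset _) := by
    intro PQ hPQ
    replace hPQ := (mem_filter.1 hPQ).2
    simpa only [mem_product, mem_filter_univ] using ⟨hPQ.left, hPQ.right⟩
  have hle := card_le_card hsub
  rw [card_product, ← sq] at hle
  have hsq := Nat.pow_le_pow_left h 2
  rw [mul_pow, mul_pow] at hsq
  omega

variable [Std.Trichotomous R]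

theorem IsStrongFreePair.mem_cylinders {s t a c : α} (h : IsStrongFreePair R P Q)
    (hs : ∀ y, ¬ R y s) (ht : ∀ y, ¬ R t y) (hst : s ≠ t)
    (ha : IsInitialIn R (univ.erase s) a) (hc : IsTerminalIn R (univ.erase t) c) :
    (P, Q) ∈ cylinder {t, c} ∅ ×ˢ cylinder {s, t} ∅ ∪ cylinder {t} ∅ ×ˢ cylinder {a} {s} ∪
      (cylinder {t} ∅ ∪ cylinder ∅ {s, t}) ×ˢ cylinder ∅ {s, a} := by
  have hs_init {S : Finset α} (hS : s ∈ S) : IsInitialIn R S s :=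
    isInitialIn_of_forall_not_rel hs hS
  have ht_term {S : Finset α} (hS : t ∈ S) : IsTerminalIn R S t :=
    isTerminalIn_of_forall_not_rel ht hS
  have hs_t : s ∈ univ.erase t := mem_erase.2 ⟨hst, mem_univ s⟩
  have ht_s : t ∈ univ.erase s := mem_erase.2 ⟨hst.symm, mem_univ t⟩
  have hP : s ∈ P → t ∈ P := h.left s t (hs_init (mem_univ s)) (ht_term (mem_univ t))
  have hQ : s ∈ Q → t ∈ Q := h.right s t (hs_init (mem_univ s)) (ht_term (mem_univ t))
  have hcP : s ∈ Q → c ∈ P := h.through t s c (hs_init hs_t) hc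
  have hatP : a ∈ Q → t ∈ P := h.through s a t ha (ht_term ht_s)
  have hstP : s ∈ Q → t ∈ P := by
    intro hsQ
    rcases eq_or_ne c s with rfl | hcs
    · exact hP (hcP hsQ)
    · have hct : c ≠ t := ne_of_mem_erase hc.1
      exact h.through c s t (hs_init (mem_erase.2 ⟨hcs.symm, mem_univ s⟩))
        (ht_term (mem_erase.2 ⟨hct.symm, mem_univ t⟩)) hsQ
  simp only [mem_union, mem_product, mem_cylinder, insert_subset_iff, singleton_subset_iff,
    disjoint_insert_right, disjoint_singleton_right, empty_subset, disjoint_empty_right, true_and,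
    and_true]
  by_cases hsQ : s ∈ Q
  · exact .inl (.inl ⟨⟨hstP hsQ, hcP hsQ⟩, hsQ, hQ hsQ⟩)
  by_cases haQ : a ∈ Q
  · exact .inl (.inr ⟨hatP haQ, haQ, hsQ⟩)
  · exact .inr ⟨(em (t ∈ P)).imp_right fun htP => ⟨mt hP htP, htP⟩, hsQ, haQ⟩

theorem card_isStrongFreePair_le_of_source_sink {s t : α} (hs : ∀ y, ¬ R y s) (ht : ∀ y, ¬ R t y)
    (hst : s ≠ t) :
    8 * #{PQ : Finset α × Finset α | IsStrongFreePair R PQ.1 PQ.2} ≤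
      3 * (2 ^ Fintype.card α) ^ 2 := by
  obtain ⟨a, ha⟩ := exists_isInitialIn (R := R) ⟨t, mem_erase.2 ⟨hst.symm, mem_univ t⟩⟩
  obtain ⟨c, hc⟩ := exists_isTerminalIn (R := R) ⟨s, mem_erase.2 ⟨hst, mem_univ s⟩⟩
  have hsa : s ≠ a := (ne_of_mem_erase ha.1).symm
  have htc : t ≠ c := (ne_of_mem_erase hc.1).symm
  have hpairs : #{PQ : Finset α × Finset α | IsStrongFreePair R PQ.1 PQ.2} ≤
      #(cylinder {t, c} ∅) * #(cylinder {s, t} ∅) + #(cylinder {t} ∅) * #(cylinder {a} {s}) +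
        (#(cylinder {t} ∅) + #(cylinder ∅ {s, t})) * #(cylinder ∅ {s, a}) := by
    simp only [← card_product]
    grw [card_le_card fun PQ hPQ => ((mem_filter_univ PQ).1 hPQ).mem_cylinders hs ht hst ha hc,
      card_union_le, card_union_le, card_product _ (cylinder ∅ {s, a}), card_union_le]
  have htc_card := two_pow_mul_card_cylinder (disjoint_empty_right {t, c})
  have hst_card := two_pow_mul_card_cylinder (disjoint_empty_right {s, t})
  have ht_card := two_pow_mul_card_cylinder (disjoint_empty_right {t})
  have ha_s_card := two_pow_mul_card_cylinder (disjoint_singleton.2 hsa.symm)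
  have hst_card' := two_pow_mul_card_cylinder (disjoint_empty_left {s, t})
  have hsa_card := two_pow_mul_card_cylinder (disjoint_empty_left {s, a})
  simp only [card_empty, card_singleton, card_pair htc, card_pair hst, card_pair hsa, add_zero,
    zero_add, Nat.reduceAdd, Nat.reducePow]
    at htc_card hst_card ht_card ha_s_card hst_card' hsa_card
  rw [show #(cylinder {s, t} ∅) = #(cylinder {t, c} ∅) by omega,
    show #(cylinder {a} {s}) = #(cylinder {t, c} ∅) by omega,
    show #(cylinder ∅ {s, t}) = #(cylinder {t, c} ∅) by omega,
    show #(cylinder ∅ {s, a}) = #(cylinder {t, c} ∅) by omega,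
    show #(cylinder {t} ∅) = 2 * #(cylinder {t, c} ∅) by omega] at hpairs
  rw [← htc_card]
  linarith

theorem card_isStrongFreePair_le [Nontrivial α] [Std.Asymm R] :
    8 * #{PQ : Finset α × Finset α | IsStrongFreePair R PQ.1 PQ.2} ≤
      3 * (2 ^ Fintype.card α) ^ 2 := by
  by_cases hsource : ∀ x, ∃ y, R y x
  · exact card_isStrongFreePair_le_of_card_avoidsReturn_le
      (card_avoidsReturn_le_of_no_source hsource)
  by_cases hsink : ∀ y, ∃ x, R y x
  · exact card_isStrongFreePair_le_of_card_avoidsReturn_le (card_avoidsReturn_le_of_no_sink hsink)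
  push Not at hsource hsink
  obtain ⟨s, hs⟩ := hsource
  obtain ⟨t, ht⟩ := hsink
  refine card_isStrongFreePair_le_of_source_sink hs ht ?_
  rintro rfl
  obtain ⟨y, hy⟩ := exists_ne s
  exact (trichotomous_of R y s).elim (hs y) (Or.rec hy (ht y))

end Pairs

end Counting

section Orientation

open Finset Function

variable {W : Type*} {H : SimpleGraph W} {k : ℕ}

theorem asymm_orient (D : H.Orient) : Std.Asymm D.1 :=
  ⟨fun a b hab => (D.2.2 a b (D.2.1 a b hab)).1 hab⟩

theorem trichotomous_orient (hH : H = ⊤) (D : H.Orient) : Std.Trichotomous D.1 :=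
  ⟨fun a b hab hba => by_contra fun hne => hab ((D.2.2 a b (hH ▸ hne)).2 hba)⟩

theorem orient_ext {D D' : H.Orient}
    (h : ∀ a b, a ≠ b → (D.1 a b ↔ D'.1 a b) ∨ (D.1 b a ↔ D'.1 b a)) : D = D' := by
  refine Subtype.ext (funext₂ fun a b => propext ?_)
  by_cases hab : H.Adj a b
  · rcases h a b hab.ne with h | h
    · exact h
    · rw [D.2.2 a b hab, D'.2.2 a b hab, h]
  · exact iff_of_false (mt (D.2.1 a b) hab) (mt (D'.2.1 a b) hab)

theorem FreeOrient.not_strongOn {D : H.Orient} (hD : FreeOrient (SFam k) D) {S : Finset W}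
    (hS : H.IsClique S) (hcard : #S = k) : ¬ StrongOn D.1 S := by
  intro hstrong
  let e : Fin k ≃ S := (S.equivFinOfCardEq hcard).symm
  have he : Injective fun i => (e i : W) := Subtype.val_injective.comp e.injective
  let T : (⊤ : SimpleGraph (Fin k)).Orient := ⟨fun i j => D.1 (e i) (e j),
    fun i j hij => ne_of_apply_ne (fun i => (e i : W)) (D.2.1 _ _ hij).ne,
    fun i j hij => D.2.2 _ _ (hS (e i).2 (e j).2 (he.ne hij))⟩
  have hlift {x y : W} (h : ReachIn D.1 S x y) (hx : x ∈ S) (hy : y ∈ S) :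
      Relation.ReflTransGen T.1 (e.symm ⟨x, hx⟩) (e.symm ⟨y, hy⟩) := by
    induction h with
    | refl => exact .refl
    | tail _ hbc ih => exact (ih hbc.1).tail (by simpa [T] using hbc.2.2)
  refine hD k T ⟨rfl, fun i j => ?_⟩ ⟨fun i => e i, he, fun _ _ h => h⟩
  simpa using hlift (hstrong _ (e i).2 _ (e j).2) (e i).2 (e j).2

section Extension

variable {α : Type*} {R : α → α → Prop} {D : (⊤ : SimpleGraph W).Orient} {ι : α ↪ W} {p q : W}

theorem avoidsReturn_of_freeOrient_vertex [Fintype α] {S : Finset α}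
    (hD : FreeOrient (SFam k) D) (hι : ∀ a b, R a b → D.1 (ι a) (ι b)) (hp : ∀ a, ι a ≠ p)
    (hS : #S + 1 = k) : AvoidsReturn R S {a | D.1 p (ι a)} {a | D.1 p (ι a)} := by
  classical
  intro x y hx hy hpx
  rw [mem_filter_univ] at hpx ⊢
  by_contra hpy
  have hyp : D.1 (ι y) p := (D.2.2 _ _ (hp y)).2 hpy
  refine hD.not_strongOn (fun _ _ _ _ hne => hne) ?_
    (strongOn_insert (hx.map ι hι) (hy.map ι hι) hpx hyp)
  rw [card_insert_of_notMem (by simpa using fun a _ => hp a), card_map, hS]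

theorem avoidsReturn_of_freeOrient_edge [Fintype α] {S : Finset α}
    (hD : FreeOrient (SFam k) D) (hι : ∀ a b, R a b → D.1 (ι a) (ι b)) (hp : ∀ a, ι a ≠ p)
    (hq : ∀ a, ι a ≠ q) (hpq : D.1 p q) (hS : #S + 2 = k) :
    AvoidsReturn R S {a | D.1 p (ι a)} {a | D.1 q (ι a)} := by
  classical
  intro x y hx hy hqx
  rw [mem_filter_univ] at hqx ⊢
  by_contra hpy
  have hyp : D.1 (ι y) p := (D.2.2 _ _ (hp y)).2 hpy
  refine hD.not_strongOn (fun _ _ _ _ hne => hne) ?_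
    (strongOn_insert_insert (hx.map ι hι) (hy.map ι hι) hqx hpq hyp)
  have hpq_ne : p ≠ q := D.2.1 p q hpq
  rw [card_insert_of_notMem (by simpa [hpq_ne] using fun a _ => hp a),
    card_insert_of_notMem (by simpa using fun a _ => hq a), card_map, hS]

variable [Fintype α]

theorem isStrongFreePair_of_freeOrient [DecidableEq α] (hD : FreeOrient (SFam k) D)
    (hι : ∀ a b, R a b → D.1 (ι a) (ι b)) (hk : Fintype.card α + 1 = k) (hp : ∀ a, ι a ≠ p)
    (hq : ∀ a, ι a ≠ q) (hpq : D.1 p q) :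
    IsStrongFreePair R {a | D.1 p (ι a)} {a | D.1 q (ι a)} where
  left := avoidsReturn_of_freeOrient_vertex hD hι hp hk
  right := avoidsReturn_of_freeOrient_vertex hD hι hq hk
  through r := avoidsReturn_of_freeOrient_edge hD hι hp hq hpq <| by
    rw [← hk, ← card_univ, ← card_erase_add_one (mem_univ r)]

theorem ncard_freeOrient_edge_le [DecidableEq α] (hk : Fintype.card α + 1 = k) (hp : ∀ a, ι a ≠ p)
    (hq : ∀ a, ι a ≠ q) (hcover : ∀ w, w = p ∨ w = q ∨ w ∈ Set.range ι) :
    {D : (⊤ : SimpleGraph W).Orient | (FreeOrient (SFam k) D ∧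
      ∀ a b, D.1 (ι a) (ι b) ↔ R a b) ∧ D.1 p q}.ncard ≤
      #{PQ : Finset α × Finset α | IsStrongFreePair R PQ.1 PQ.2} := by
  rw [← Set.ncard_coe_finset]
  refine Set.ncard_le_ncard_of_injOn
    (fun D => (({a | D.1 p (ι a)} : Finset α), ({a | D.1 q (ι a)} : Finset α))) ?_ ?_
  · rintro D ⟨⟨hD, hR⟩, hpq⟩
    simpa using isStrongFreePair_of_freeOrient hD (fun a b => (hR a b).2) hk hp hq hpq
  · rintro D ⟨⟨-, hR⟩, hpq⟩ D' ⟨⟨-, hR'⟩, hpq'⟩ h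
    have hP (a : α) : D.1 p (ι a) ↔ D'.1 p (ι a) := by
      simpa using Finset.ext_iff.1 (Prod.ext_iff.1 h).1 a
    have hQ (a : α) : D.1 q (ι a) ↔ D'.1 q (ι a) := by
      simpa using Finset.ext_iff.1 (Prod.ext_iff.1 h).2 a
    refine orient_ext fun a b hab => ?_
    rcases hcover a with rfl | rfl | ⟨a, rfl⟩ <;> rcases hcover b with rfl | rfl | ⟨b, rfl⟩ <;>
      simp_all

theorem four_mul_ncard_freeOrient_le (hH : H = ⊤) [Nontrivial α] [Std.Trichotomous R] [Std.Asymm R]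
    (hk : Fintype.card α + 1 = k) (hp : ∀ a, ι a ≠ p) (hq : ∀ a, ι a ≠ q) (hpq : p ≠ q)
    (hcover : ∀ w, w = p ∨ w = q ∨ w ∈ Set.range ι) :
    4 * {D : H.Orient | FreeOrient (SFam k) D ∧
      ∀ a b, D.1 (ι a) (ι b) ↔ R a b}.ncard ≤ 3 * (2 ^ Fintype.card α) ^ 2 := by
  classical
  subst hH
  set E := {D : (⊤ : SimpleGraph W).Orient | FreeOrient (SFam k) D ∧
    ∀ a b, D.1 (ι a) (ι b) ↔ R a b} with hE
  have hsplit : E = {D | D ∈ E ∧ D.1 p q} ∪ {D | D ∈ E ∧ D.1 q p} := by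
    ext D
    have := D.2.2 p q hpq
    simp only [Set.mem_union, Set.mem_ofPred_eq]
    tauto
  have hle := Set.ncard_union_le {D | D ∈ E ∧ D.1 p q} {D | D ∈ E ∧ D.1 q p}
  rw [← hsplit] at hle
  have hpq_le := ncard_freeOrient_edge_le (R := R) hk hp hq hcover
  have hqp_le := ncard_freeOrient_edge_le (R := R) hk hq hp fun w => or_left_comm.1 (hcover w)
  have hpairs := card_isStrongFreePair_le (R := R)
  simp only [hE, Set.mem_ofPred_eq] at *
  omega

end Extension

theorem four_mul_extEdge_le {G : SimpleGraph V} {K : Finset V} {u v : V} (hK : G.IsClique ↑K)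
    (hcard : K.card + 1 = k) (hk : 3 ≤ k) (huv : G.Adj u v) (hadju : ∀ w ∈ K, G.Adj u w)
    (hadjv : ∀ w ∈ K, G.Adj v w) (T : (G.induce (↑K : Set V)).Orient) :
    4 * extEdge G (SFam k) (↑K : Set V) u v T ≤ 3 * (2 ^ K.card) ^ 2 := by
  have hclique : G.IsClique (insert u (insert v (K : Set V))) :=
    (hK.insert fun w hw _ => hadjv w hw).insert <| by
      rintro w (rfl | hw) -
      exacts [huv, hadju w hw]
  have := asymm_orient T
  have := trichotomous_orient (SimpleGraph.induce_eq_top.2 hK) T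
  have hcardK : Fintype.card (K : Set V) = K.card := by simp
  have : Nontrivial (K : Set V) := Fintype.one_lt_card_iff_nontrivial.1 (by omega)
  have hsub : (K : Set V) ⊆ insert u (insert v K) :=
    (Set.subset_insert v _).trans (Set.subset_insert u _)
  let p : ↥(insert u (insert v (K : Set V))) := ⟨u, Set.mem_insert u _⟩
  let q : ↥(insert u (insert v (K : Set V))) :=
    ⟨v, Set.mem_insert_of_mem u (Set.mem_insert v _)⟩
  let ι := Set.embeddingOfSubset _ _ hsub
  have hp (w : (K : Set V)) : ι w ≠ p := ne_of_apply_ne Subtype.val (hadju w w.2).ne'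
  have hq (w : (K : Set V)) : ι w ≠ q := ne_of_apply_ne Subtype.val (hadjv w w.2).ne'
  have hpq : p ≠ q := ne_of_apply_ne Subtype.val huv.ne
  have hcover : ∀ w, w = p ∨ w = q ∨ w ∈ Set.range ι := by
    rintro ⟨w, rfl | rfl | hw⟩
    exacts [.inl rfl, .inr (.inl rfl), .inr (.inr ⟨⟨w, hw⟩, rfl⟩)]
  have hle := four_mul_ncard_freeOrient_le (R := T.1) (k := k)
    (SimpleGraph.induce_eq_top.2 hclique) (by rwa [hcardK]) hp hq hpq hcover
  rw [hcardK] at hle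
  refine le_of_eq_of_le (congrArg (4 * ·) (Nat.card_congr (.subtypeEquivRight fun D => ?_))) hle
  exact and_congr_right'
    ⟨fun h a b => h a b a.2 b.2, fun h a b ha hb => h ⟨a, ha⟩ ⟨b, hb⟩⟩

end Orientation

theorem extEdge_le_of_clique_general (G : SimpleGraph V) (k : ℕ) (hk : 3 ≤ k) (K : Finset V)
    (hK : G.IsClique ↑K) (hcard : K.card = k - 1) (u v : V) (huv : G.Adj u v)
    (hadju : ∀ w ∈ K, G.Adj u w) (hadjv : ∀ w ∈ K, G.Adj v w)
    (T : (G.induce (↑K : Set V)).Orient) :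
    extEdge G (SFam k) (↑K : Set V) u v T ≤ 6 * 2 ^ (2 * k - 5) := by
  have hle := four_mul_extEdge_le hK (by omega) hk huv hadju hadjv T
  have hpow : (2 ^ K.card) ^ 2 = 2 ^ 3 * 2 ^ (2 * k - 5) := by
    rw [← pow_mul, ← pow_add]
    congr 1
    omega
  omega

/-- If `K` is a clique of `G` with `k - 1` vertices and `u, v ∉ K` are adjacent
vertices each adjacent to all vertices of `K`, then for any orientation `K⃗` of `K`
the number of ways to orient the edge `uv` and the edges between `{u, v}` and `K`
avoiding a strongly connected tournament on `k` vertices is at most `6 · 2^(2k-5)`. -/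
theorem extEdge_le_of_clique {n : ℕ} (G : SimpleGraph (Fin n)) (k : ℕ) (hk : 4 ≤ k)
    (K : Finset (Fin n)) (hK : G.IsClique ↑K) (hcard : K.card = k - 1)
    (u v : Fin n) (hu : u ∉ K) (hv : v ∉ K) (huv : G.Adj u v)
    (hadju : ∀ w ∈ K, G.Adj u w) (hadjv : ∀ w ∈ K, G.Adj v w)
    (T : (G.induce (↑K : Set (Fin n))).Orient) :
    extEdge G (SFam k) (↑K : Set (Fin n)) u v T ≤ 6 * 2 ^ (2 * k - 5) :=
  extEdge_le_of_clique_general G k (by omega) K hK hcard u v huv hadju hadjv T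
end
end

section
/- Let k ≥ 5 be an integer. Then the number SC(K_k) of strongly connected orientations of the complete graph K_k satisfies SC(K_k) > 2^{C(k,2) − 1}, where C(k,2) = k(k−1)/2; that is, more than half of all orientations of K_k are strongly connected. -/
open scoped Classical

noncomputable section

universe u

variable {V : Type u}

/-!
A tournament on `n ≥ 1` vertices amounts to its initial strong component `S`, a strongly connected
tournament on `S` and an arbitrary tournament on `Sᶜ`, since `S` dominates `Sᶜ`. Hence
`2 ^ C(n,2) = ∑_{1 ≤ m ≤ n} C(n,m) SC(K_m) 2 ^ C(n-m,2)`.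
This gives `SC(K_5) = 544 > 2 ^ 9` and `SC(K_6) = 22320 > 2 ^ 14`. For `n ≥ 7` bound `SC(K_m)` by
`2 ^ C(m,2)` in the terms with `m < n`: those with `m = 1` and `m = n - 1` add up to at most
`2 n 2 ^ C(n-1,2)`, the others to at most `2 ^ n 2 ^ (C(n-2,2) + 1)`, and together this is less
than half of `2 ^ C(n,2)`.
-/

/-- Tournaments on the vertex set `V`, as orientations of the complete graph. -/
abbrev Tourn (V : Type*) := (⊤ : SimpleGraph V).Orient

open SimpleGraph in
/-- Once the vertices are ordered, an orientation amounts to a choice, for each edge, of whether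
it points upwards. -/
def orientEquivEdgeLabeling [LinearOrder V] (G : SimpleGraph V) :
    G.Orient ≃ EdgeLabeling G Prop where
  toFun D := .mk (fun u v _ ↦ (u < v ↔ D.1 u v)) fun u v h ↦ by
    have := D.2.2 u v h
    have := h.ne
    grind
  invFun C := ⟨fun u v ↦ ∃ h : G.Adj u v, (u < v ↔ C.get u v h), fun _ _ h ↦ h.1, fun u v h ↦ by
    have := C.get_comm v u h
    have := h.ne
    have := h.symm
    grind⟩
  left_inv D := by
    ext u v
    have := D.2.1 u v
    simp only [EdgeLabeling.get_mk]
    grind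
  right_inv C := by
    ext u v h
    simp only [EdgeLabeling.get_mk, h, exists_true_left]
    grind

lemma card_tourn [Finite V] : Nat.card (Tourn V) = 2 ^ (Nat.card V).choose 2 := by
  have := Fintype.ofFinite V
  let : LinearOrder V := linearOrderOfSTO WellOrderingRel
  rw [Nat.card_congr (orientEquivEdgeLabeling _), Nat.card_eq_fintype_card,
    SimpleGraph.card_topEdgeLabeling, Fintype.card_prop, Nat.card_eq_fintype_card]

namespace Tourn

variable {W : Type*}

lemma ne_of_adj (D : Tourn V) {u v : V} (h : D.1 u v) : u ≠ v :=
  D.2.1 u v h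

lemma adj_iff_not_adj (D : Tourn V) {u v : V} (h : u ≠ v) : D.1 u v ↔ ¬ D.1 v u :=
  D.2.2 u v h

/-- The pullback of a tournament along an injection of vertex sets. -/
def comap (D : Tourn W) (f : V ↪ W) : Tourn V :=
  ⟨fun u v ↦ D.1 (f u) (f v), fun _ _ h ↦ ne_of_apply_ne f (D.ne_of_adj h),
    fun _ _ h ↦ D.adj_iff_not_adj (f.injective.ne h)⟩

/-- The subtournament on a set of vertices. -/
abbrev induce (D : Tourn V) (S : Set V) : Tourn S :=
  D.comap (.subtype (· ∈ S))

/-- Strong connectivity of a tournament on any vertex set, extending `IsStrongTourn`. -/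
def IsStrong (D : Tourn V) : Prop :=
  ∀ u v, Relation.ReflTransGen D.1 u v

lemma IsStrong.comap_equiv {D : Tourn W} (hD : D.IsStrong) (e : V ≃ W) :
    (D.comap e.toEmbedding).IsStrong := by
  intro u v
  have := (hD (e u) (e v)).lift (p := (D.comap e.toEmbedding).1) e.symm fun x y h ↦ by
    simpa [comap, Function.onFun] using h
  simpa [Function.onFun] using this

/-- Tournaments transported along a bijection of vertex sets. -/
def congr (e : V ≃ W) : Tourn V ≃ Tourn W where
  toFun D := D.comap e.symm.toEmbedding
  invFun D := D.comap e.toEmbedding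
  left_inv D := by ext; simp [comap]
  right_inv D := by ext; simp [comap]

lemma isStrong_congr_iff (e : V ≃ W) (D : Tourn V) : (congr e D).IsStrong ↔ D.IsStrong :=
  ⟨fun h ↦ (congr e).symm_apply_apply D ▸ h.comap_equiv e, fun h ↦ h.comap_equiv e.symm⟩

/-- Every edge between `S` and its complement points out of `S`. -/
def Dominates (D : Tourn V) (S : Set V) : Prop :=
  ∀ u ∈ S, ∀ v ∉ S, D.1 u v

/-- The tournament in which the tournament `A` on `S` dominates the tournament `B` on `Sᶜ`. -/
def join (S : Set V) (A : Tourn S) (B : Tourn ↥Sᶜ) : Tourn V :=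
  ⟨fun u v ↦ (∃ hu hv, A.1 ⟨u, hu⟩ ⟨v, hv⟩) ∨ (u ∈ S ∧ v ∉ S) ∨ ∃ hu hv, B.1 ⟨u, hu⟩ ⟨v, hv⟩, by
    rintro u v (⟨hu, hv, h⟩ | ⟨hu, hv⟩ | ⟨hu, hv, h⟩)
    · simpa using A.ne_of_adj h
    · exact ne_of_mem_of_not_mem hu hv
    · simpa using B.ne_of_adj h, by
    intro u v huv
    have hA (hu : u ∈ S) (hv : v ∈ S) := A.adj_iff_not_adj (u := ⟨u, hu⟩) (v := ⟨v, hv⟩) (by simpa)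
    have hB (hu : u ∈ Sᶜ) (hv : v ∈ Sᶜ) :=
      B.adj_iff_not_adj (u := ⟨u, hu⟩) (v := ⟨v, hv⟩) (by simpa)
    by_cases hu : u ∈ S <;> by_cases hv : v ∈ S <;> simp_all⟩

/-- A tournament dominated by `S` is determined by its restrictions to `S` and `Sᶜ`, which are
arbitrary. -/
def dominatesEquiv (S : Set V) : {D : Tourn V // D.Dominates S} ≃ Tourn S × Tourn ↥Sᶜ where
  toFun D := (D.1.induce S, D.1.induce Sᶜ)
  invFun p := ⟨join S p.1 p.2, fun _ hu _ hv ↦ .inr (.inl ⟨hu, hv⟩)⟩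
  left_inv D := by
    ext u v
    have huv := D.2 u
    have hvu (hv : v ∈ S) (hu : u ∉ S) : ¬ D.1.1 u v :=
      (D.1.adj_iff_not_adj (ne_of_mem_of_not_mem hv hu)).1 (D.2 v hv u hu)
    by_cases hu : u ∈ S <;> by_cases hv : v ∈ S <;> simp_all [join, comap]
  right_inv p := by
    ext ⟨u, hu⟩ ⟨v, hv⟩
    · simp_all [join, comap]
    · have hu' : u ∉ S := hu
      have hv' : v ∉ S := hv
      simp [join, comap, hu', hv']

lemma reachable_total (D : Tourn V) (u v : V) :
    Relation.ReflTransGen D.1 u v ∨ Relation.ReflTransGen D.1 v u := by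
  by_cases huv : u = v
  · exact .inl (huv ▸ .refl)
  · by_cases h : D.1 u v
    · exact .inl (.single h)
    · exact .inr (.single ((D.adj_iff_not_adj (Ne.symm huv)).2 h))

/-- The initial strong component of a tournament, as its set of vertices from which every vertex
is reachable. It may be empty if the tournament is infinite. -/
def initialComponent (D : Tourn V) : Set V :=
  {u | ∀ v, Relation.ReflTransGen D.1 u v}

lemma initialComponent_nonempty [Finite V] [Nonempty V] (D : Tourn V) :
    D.initialComponent.Nonempty := by
  have := Fintype.ofFinite V
  have directed : Directed (Function.swap (Relation.ReflTransGen D.1)) (id : V → V) := fun u v ↦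
    (D.reachable_total u v).elim (fun h ↦ ⟨u, .refl, h⟩) fun h ↦ ⟨v, h, .refl⟩
  have : IsTrans V (Function.swap (Relation.ReflTransGen D.1)) := ⟨fun _ _ _ h h' ↦ h'.trans h⟩
  obtain ⟨a, ha⟩ := directed.finset_le Finset.univ
  exact ⟨a, fun v ↦ ha v (Finset.mem_univ v)⟩

lemma mem_initialComponent_of_reachable {D : Tourn V} {u v : V} (hv : v ∈ D.initialComponent)
    (huv : Relation.ReflTransGen D.1 u v) : u ∈ D.initialComponent :=
  fun w ↦ huv.trans (hv w)

lemma dominates_initialComponent (D : Tourn V) : D.Dominates D.initialComponent :=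
  fun _ hu _ hv ↦ (D.adj_iff_not_adj (ne_of_mem_of_not_mem hu hv)).2 fun h ↦
    hv (mem_initialComponent_of_reachable hu (.single h))

lemma isStrong_induce_initialComponent (D : Tourn V) : (D.induce D.initialComponent).IsStrong := by
  rintro ⟨u, hu⟩ ⟨w, hw⟩
  have path : Relation.ReflTransGen D.1 u w := hu w
  induction path using Relation.ReflTransGen.head_induction_on with
  | refl => exact .refl
  | head huv hvw ih =>
    have hv := mem_initialComponent_of_reachable hw hvw
    have adj : (D.induce D.initialComponent).1 ⟨_, hu⟩ ⟨_, hv⟩ := huv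
    exact .head adj (ih hv)

lemma Dominates.mem_of_reachable {D : Tourn V} {S : Set V} (hS : D.Dominates S) {u v : V}
    (huv : Relation.ReflTransGen D.1 u v) (hv : v ∈ S) : u ∈ S := by
  induction huv using Relation.ReflTransGen.head_induction_on with
  | refl => exact hv
  | head huw _ hw =>
    by_contra hu
    exact (D.adj_iff_not_adj (D.ne_of_adj huw)).1 huw (hS _ hw _ hu)

lemma initialComponent_eq_of_dominates {D : Tourn V} {S : Set V} (hne : S.Nonempty)
    (hS : D.Dominates S) (hstrong : (D.induce S).IsStrong) : D.initialComponent = S := by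
  obtain ⟨s, hs⟩ := hne
  refine Set.Subset.antisymm (fun u hu ↦ hS.mem_of_reachable (hu s) hs) fun u hu v ↦ ?_
  by_cases hv : v ∈ S
  · exact (hstrong ⟨u, hu⟩ ⟨v, hv⟩).lift Subtype.val fun _ _ h ↦ h
  · exact .single (hS u hu v hv)

lemma initialComponent_eq_iff {D : Tourn V} {S : Set V} (hne : S.Nonempty) :
    D.initialComponent = S ↔ D.Dominates S ∧ (D.induce S).IsStrong := by
  refine ⟨?_, fun h ↦ initialComponent_eq_of_dominates hne h.1 h.2⟩
  rintro rfl
  exact ⟨D.dominates_initialComponent, D.isStrong_induce_initialComponent⟩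

end Tourn

/-- The number `SC(K_n)` of strongly connected tournaments on `n` labeled vertices. -/
def strongCount (n : ℕ) : ℕ :=
  Nat.card {D : Tourn (Fin n) // D.IsStrong}

lemma card_isStrong [Finite V] : Nat.card {D : Tourn V // D.IsStrong} = strongCount (Nat.card V) :=
  Nat.card_congr ((Tourn.congr (Finite.equivFin V)).subtypeEquiv fun D ↦
    (Tourn.isStrong_congr_iff _ D).symm)

lemma strongCount_le (n : ℕ) : strongCount n ≤ 2 ^ n.choose 2 :=
  calc
    _ ≤ Nat.card (Tourn (Fin n)) := Finite.card_subtype_le _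
    _ = _ := by rw [card_tourn, Nat.card_fin]

lemma card_initialComponent_eq [Finite V] {S : Set V} (hne : S.Nonempty) :
    Nat.card {D : Tourn V // D.initialComponent = S} =
      strongCount S.ncard * 2 ^ (Sᶜ.ncard).choose 2 :=
  calc
    _ = Nat.card {D : {D : Tourn V // D.Dominates S} // (D.1.induce S).IsStrong} :=
      Nat.card_congr ((Equiv.subtypeEquivRight fun _ ↦ Tourn.initialComponent_eq_iff hne).trans
        (Equiv.subtypeSubtypeEquivSubtypeInter _ fun D : Tourn V ↦ (D.induce S).IsStrong).symm)
    _ = Nat.card {p : Tourn S × Tourn ↥Sᶜ // p.1.IsStrong} :=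
      Nat.card_congr ((Tourn.dominatesEquiv S).subtypeEquiv fun _ ↦ .rfl)
    _ = Nat.card ({A : Tourn S // A.IsStrong} × Tourn ↥Sᶜ) :=
      Nat.card_congr Equiv.prodSubtypeFstEquivSubtypeProd
    _ = _ := by
      rw [Nat.card_prod, card_isStrong, card_tourn, Nat.card_coe_set_eq, Nat.card_coe_set_eq]

lemma sum_set_apply_ncard {M : Type*} [AddCommMonoid M] [Fintype V] (f : ℕ → M) :
    ∑ S : Set V, f S.ncard =
      ∑ m ∈ Finset.range (Fintype.card V + 1), (Fintype.card V).choose m • f m := by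
  rw [← Fintype.finsetEquivSet.sum_comp, ← Finset.card_univ, ← Finset.sum_powerset_apply_card,
    Finset.powerset_univ]
  simp only [Fintype.finsetEquivSet_apply, Set.ncard_coe_finset]

lemma sum_choose_mul_strongCount (n : ℕ) :
    ∑ m ∈ Finset.range (n + 1),
      (n + 1).choose (m + 1) * (strongCount (m + 1) * 2 ^ (n - m).choose 2) =
        2 ^ (n + 1).choose 2 := by
  let f (m : ℕ) : ℕ := if m = 0 then 0 else strongCount m * 2 ^ (n + 1 - m).choose 2
  have fiber (S : Set (Fin (n + 1))) :
      Nat.card {D : Tourn (Fin (n + 1)) // D.initialComponent = S} = f S.ncard := by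
    rcases S.eq_empty_or_nonempty with rfl | hne
    · simp [f, (Tourn.initialComponent_nonempty _).ne_empty]
    · rw [card_initialComponent_eq hne, Set.ncard_compl, Nat.card_fin]
      simp [f, hne.ncard_pos.ne']
  symm
  calc
    _ = Nat.card (Tourn (Fin (n + 1))) := by rw [card_tourn, Nat.card_fin]
    _ = ∑ S, Nat.card {D : Tourn (Fin (n + 1)) // D.initialComponent = S} := by
      rw [← Nat.card_sigma, Nat.card_congr (Equiv.sigmaFiberEquiv Tourn.initialComponent)]
    _ = ∑ m ∈ Finset.range (n + 2), (n + 1).choose m * f m := by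
      simp only [fiber, sum_set_apply_ncard, Fintype.card_fin, smul_eq_mul]
    _ = _ := by
      rw [Finset.sum_range_succ']
      simp [f]

lemma strongCount_succ (n : ℕ) :
    strongCount (n + 1) = 2 ^ (n + 1).choose 2 -
      ∑ m ∈ Finset.range n,
        (n + 1).choose (m + 1) * (strongCount (m + 1) * 2 ^ (n - m).choose 2) := by
  have recurrence := sum_choose_mul_strongCount n
  rw [Finset.sum_range_succ, Nat.choose_self, Nat.sub_self, Nat.choose_zero_succ, pow_zero, mul_one,
    one_mul] at recurrence
  exact Nat.eq_sub_of_add_eq' recurrence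

lemma strongCount_five : strongCount 5 = 544 := by
  simp [strongCount_succ 0, strongCount_succ 1, strongCount_succ 2, strongCount_succ 3,
    strongCount_succ 4, Finset.sum_range_succ, Nat.choose]

lemma strongCount_six : strongCount 6 = 22320 := by
  simp [strongCount_succ 0, strongCount_succ 1, strongCount_succ 2, strongCount_succ 3,
    strongCount_succ 5, strongCount_five, Finset.sum_range_succ, Nat.choose]

lemma choose_two_add (a b : ℕ) : (a + b).choose 2 = a.choose 2 + b.choose 2 + a * b := by
  induction b with
  | zero => simp
  | succ b ih =>
    rw [← add_assoc, Nat.choose_succ_succ' (a + b) 1, Nat.choose_succ_succ' b 1, ih]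
    simp only [Nat.choose_one_right]
    ring

lemma choose_two_add_choose_two_le (a b : ℕ) :
    (a + 2).choose 2 + (b + 2).choose 2 ≤ (a + b + 2).choose 2 + 1 := by
  simp only [choose_two_add, Nat.choose_self]
  linarith [Nat.zero_le (a * b)]

lemma strongCount_mul_two_pow_le (a b : ℕ) :
    strongCount (a + 2) * 2 ^ (b + 2).choose 2 ≤ 2 ^ ((a + b + 2).choose 2 + 1) :=
  calc
    _ ≤ 2 ^ (a + 2).choose 2 * 2 ^ (b + 2).choose 2 := by grw [strongCount_le]
    _ = 2 ^ ((a + 2).choose 2 + (b + 2).choose 2) := (pow_add ..).symm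
    _ ≤ _ := Nat.pow_le_pow_right two_pos (choose_two_add_choose_two_le a b)

lemma sum_choose_add_le (n k l : ℕ) : ∑ m ∈ Finset.range l, n.choose (m + k) ≤ 2 ^ n :=
  calc
    _ = ∑ i ∈ (Finset.range l).map (addRightEmbedding k), n.choose i := by simp
    _ ≤ ∑ i ∈ Finset.range (n + 1), n.choose i := Finset.sum_le_sum_of_ne_zero fun i _ hi ↦
      Finset.mem_range_succ_iff.2 (not_lt.1 (mt Nat.choose_eq_zero_of_lt hi))
    _ = 2 ^ n := Nat.sum_range_choose n

lemma sum_choose_mul_strongCount_le (n : ℕ) :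
    ∑ m ∈ Finset.range n,
      (n + 3).choose (m + 2) * (strongCount (m + 2) * 2 ^ (n + 1 - m).choose 2) ≤
        2 ^ (n + 3) * 2 ^ ((n + 1).choose 2 + 1) :=
  calc
    _ ≤ ∑ m ∈ Finset.range n, (n + 3).choose (m + 2) * 2 ^ ((n + 1).choose 2 + 1) := by
      refine Finset.sum_le_sum fun m hm ↦ Nat.mul_le_mul_left _ ?_
      obtain ⟨b, rfl⟩ := Nat.exists_eq_add_of_lt (Finset.mem_range.1 hm)
      convert strongCount_mul_two_pow_le m b using 4
      omega
    _ ≤ _ := by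
      rw [← Finset.sum_mul]
      grw [sum_choose_add_le]

lemma two_pow_choose_two_le_strongCount_add (n : ℕ) :
    2 ^ (n + 3).choose 2 ≤ strongCount (n + 3) +
      (2 * (n + 3) * 2 ^ (n + 2).choose 2 + 2 ^ (n + 3) * 2 ^ ((n + 1).choose 2 + 1)) := by
  have source_le :
      (n + 3) * (strongCount 1 * 2 ^ (n + 2).choose 2) ≤ (n + 3) * 2 ^ (n + 2).choose 2 := by
    grw [strongCount_le 1]
    simp
  have sink_le : (n + 3) * strongCount (n + 2) ≤ (n + 3) * 2 ^ (n + 2).choose 2 := by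
    grw [strongCount_le]
  have middle_le := sum_choose_mul_strongCount_le n
  have recurrence := sum_choose_mul_strongCount (n + 2)
  rw [Finset.sum_range_succ, Finset.sum_range_succ, Finset.sum_range_succ'] at recurrence
  simp only [Nat.reduceSubDiff, zero_add, Nat.choose_one_right, tsub_zero,
    Nat.choose_succ_self_right, add_tsub_cancel_left, Nat.choose_succ_self, pow_zero, mul_one,
    Nat.choose_self, tsub_self, Nat.choose_zero_succ, one_mul] at recurrence
  linarith

lemma two_mul_error_lt_two_pow_choose_two {n : ℕ} (hn : 4 ≤ n) :
    2 * (2 * (n + 3) * 2 ^ (n + 2).choose 2 + 2 ^ (n + 3) * 2 ^ ((n + 1).choose 2 + 1)) <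
      2 ^ (n + 3).choose 2 := by
  have linear_lt : 2 * (n + 3) + 8 < 2 ^ (n + 1) := by
    induction n, hn using Nat.le_induction with
    | base => norm_num
    | succ n _ ih => rw [pow_succ]; omega
  have choose_add_two : (n + 2).choose 2 = (n + 1).choose 2 + (n + 1) := by
    simpa using choose_two_add (n + 1) 1
  have choose_add_three : (n + 3).choose 2 = (n + 1).choose 2 + (n + 1) + (n + 2) := by
    simpa [choose_add_two] using choose_two_add (n + 2) 1
  calc
    _ = 2 ^ ((n + 1).choose 2 + (n + 2)) * (2 * (n + 3) + 8) := by rw [choose_add_two]; ring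
    _ < 2 ^ ((n + 1).choose 2 + (n + 2)) * 2 ^ (n + 1) := by gcongr
    _ = _ := by rw [choose_add_three]; ring

lemma two_pow_lt_two_mul_strongCount {n : ℕ} (hn : 5 ≤ n) :
    2 ^ n.choose 2 < 2 * strongCount n := by
  rcases (by omega : n = 5 ∨ n = 6 ∨ 7 ≤ n) with rfl | rfl | h
  · norm_num [strongCount_five, Nat.choose]
  · norm_num [strongCount_six, Nat.choose]
  · obtain ⟨n, rfl⟩ : ∃ m, n = m + 3 := Nat.exists_eq_add_of_le' (by omega)
    have main := two_pow_choose_two_le_strongCount_add n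
    have error := two_mul_error_lt_two_pow_choose_two (n := n) (by omega)
    omega

/-- For `k ≥ 5`, more than half of all orientations of the complete graph `K_k` are
strongly connected: `SC(K_k) > 2 ^ (C(k,2) - 1)`. -/
theorem two_pow_lt_card_strong_orientations (k : ℕ) (hk : 5 ≤ k) :
    2 ^ (k.choose 2 - 1) <
      Nat.card {D : (⊤ : SimpleGraph (Fin k)).Orient // IsStrongTourn D} := by
  have hpos : 0 < k.choose 2 := Nat.choose_pos (by omega)
  rw [← mul_lt_mul_iff_right₀ two_pos, ← pow_succ', Nat.sub_add_cancel hpos]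
  exact two_pow_lt_two_mul_strongCount hk
end
end

section
/- For every integer k ≥ 5, the number of 𝓢_k-free orientations of the complete graph K_k satisfies S_k(K_k) < 2^{t_{k-1}(k)}. -/
open scoped Classical

noncomputable section

universe u

variable {V : Type u}

/-!
A tournament that is not strong splits into two parts, one of which dominates the other, so on five
vertices it has a source or a sink; inclusion–exclusion over these leaves at most `480 < 2 ^ 9` of
the `2 ^ 10` tournaments. For larger orders, insert a new vertex: if the old tournament is not
strong, some vertex `a` reaches everything and some other vertex `b` is reached by everything, and
the extension is strong as soon as the new vertex beats `a` and loses to `b`, so at most three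
quarters of the extensions fail to be strong; if the old tournament is strong, at most two
extensions fail. Hence fewer than half of the tournaments on `k ≥ 5` vertices are not strong, and
half of `2 ^ (k.choose 2)` is the claimed bound because the Turán graph misses exactly one edge.
-/

open Finset Relation

theorem card_subtype_ne [Fintype V] (u : V) :
    Fintype.card {v // v ≠ u} = Fintype.card V - 1 :=
  Set.card_ne_eq u

theorem four_mul_card_filter_not_mem_and_notMem {α : Type*} [Fintype α] {a b : α} (hab : a ≠ b) :
    4 * #{x : Finset α | ¬ (a ∈ x ∧ b ∉ x)} = 3 * 2 ^ Fintype.card α := by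
  have hIcc : ({x | a ∈ x ∧ b ∉ x} : Finset (Finset α)) = Icc {a} {b}ᶜ := by
    ext x
    simp [subset_compl_comm (s := x)]
  have hcard : #{x : Finset α | a ∈ x ∧ b ∉ x} = 2 ^ (Fintype.card α - 2) := by
    rw [hIcc, card_Icc_finset (by simpa using hab.symm), card_compl, card_singleton, card_singleton,
      Nat.sub_sub]
  have hsum := card_filter_add_card_filter_not (s := univ) fun x : Finset α => a ∈ x ∧ b ∉ x
  rw [hcard, card_univ, Fintype.card_finset] at hsum
  have htwo : 2 ≤ Fintype.card α := Fintype.one_lt_card_iff.2 ⟨a, b, hab⟩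
  have hpow : 2 ^ Fintype.card α = 4 * 2 ^ (Fintype.card α - 2) := by
    rw [← pow_mul_pow_sub 2 htwo]
    norm_num
  lia

/-- A tournament with vertex type `V`, i.e. an orientation of the complete graph on `V`. -/
abbrev Tournament (V : Type u) : Type u :=
  (⊤ : SimpleGraph V).Orient

namespace Tournament

theorem irrefl (T : Tournament V) (u : V) : ¬ T.1 u u :=
  fun h => (T.2.1 u u h).ne rfl

theorem beats_iff_not_beats (T : Tournament V) {u v : V} (h : u ≠ v) : T.1 u v ↔ ¬ T.1 v u :=
  T.2.2 u v h

theorem beats_or_beats (T : Tournament V) {u v : V} (h : u ≠ v) : T.1 u v ∨ T.1 v u :=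
  or_iff_not_imp_right.2 (T.beats_iff_not_beats h).2

/-- The tournament obtained from `T` by reversing every edge. -/
def reverse (T : Tournament V) : Tournament V :=
  ⟨fun u v => T.1 v u, fun u v h => (T.2.1 v u h).symm, fun u v h => T.2.2 v u h.symm⟩

/-- Strong connectivity over an arbitrary vertex type; on `Fin k` this is `IsStrongTourn`. -/
def IsStrong (T : Tournament V) : Prop :=
  ∀ u v, ReflTransGen T.1 u v

/-- The vertex `u` beats every other vertex of `T`. -/
def IsSource (T : Tournament V) (u : V) : Prop :=
  ∀ v, v ≠ u → T.1 u v

/-- The vertex `u` loses to every other vertex of `T`. -/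
def IsSink (T : Tournament V) (u : V) : Prop :=
  ∀ v, v ≠ u → T.1 v u

theorem IsSource.eq {T : Tournament V} {u v : V} (hu : T.IsSource u) (hv : T.IsSource v) :
    u = v := by
  by_contra h
  exact (T.beats_iff_not_beats h).1 (hu v (Ne.symm h)) (hv u h)

theorem exists_forall_reflTransGen_from [Finite V] [Nonempty V] (T : Tournament V) :
    ∃ a, ∀ v, ReflTransGen T.1 a v := by
  have : IsTrans V fun u v => ReflTransGen T.1 v u := ⟨fun _ _ _ huv hvw => hvw.trans huv⟩
  have hdir : Directed (fun u v => ReflTransGen T.1 v u) (id : V → V) := by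
    intro u v
    rcases eq_or_ne u v with rfl | huv
    · exact ⟨u, .refl, .refl⟩
    · rcases T.beats_or_beats huv with h | h
      · exact ⟨u, .refl, .single h⟩
      · exact ⟨v, .single h, .refl⟩
  exact hdir.finite_le id

theorem exists_forall_reflTransGen_to [Finite V] [Nonempty V] (T : Tournament V) :
    ∃ b, ∀ v, ReflTransGen T.1 v b := by
  obtain ⟨b, hb⟩ := T.reverse.exists_forall_reflTransGen_from
  exact ⟨b, fun v => reflTransGen_swap.1 (hb v)⟩

theorem exists_isSource_of_card_le_two (T : Tournament V) {B : Finset V} (hB : B.Nonempty)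
    (hcard : #B ≤ 2) (hout : ∀ u ∈ B, ∀ v ∉ B, T.1 u v) : ∃ u, T.IsSource u := by
  have hpos := hB.card_pos
  rcases (by lia : #B = 1 ∨ #B = 2) with h | h
  · obtain ⟨u, rfl⟩ := card_eq_one.1 h
    exact ⟨u, fun v hv => hout u (mem_singleton_self u) v (by simpa using hv)⟩
  · obtain ⟨u, w, huw, rfl⟩ := card_eq_two.1 h
    wlog hbeats : T.1 u w generalizing u w
    · rw [pair_comm] at hB hcard hout hpos h
      exact this w u huw.symm hB hcard hout hpos h ((T.beats_or_beats huw).resolve_left hbeats)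
    refine ⟨u, fun v hvu => ?_⟩
    by_cases hvw : v = w
    · exact hvw ▸ hbeats
    · exact hout u (mem_insert_self u _) v (by simp [hvu, hvw])

theorem exists_isSink_of_card_le_two (T : Tournament V) {B : Finset V} (hB : B.Nonempty)
    (hcard : #B ≤ 2) (hin : ∀ u ∈ B, ∀ v ∉ B, T.1 v u) : ∃ u, T.IsSink u :=
  T.reverse.exists_isSource_of_card_le_two hB hcard hin

theorem exists_isSource_or_exists_isSink [Fintype V] {T : Tournament V}
    (hV : Fintype.card V ≤ 5) (hT : ¬ T.IsStrong) :
    (∃ u, T.IsSource u) ∨ ∃ u, T.IsSink u := by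
  simp only [IsStrong, not_forall] at hT
  obtain ⟨a, b, hab⟩ := hT
  let A : Finset V := {v | ReflTransGen T.1 a v}
  have mem_A (v : V) : v ∈ A ↔ ReflTransGen T.1 a v := mem_filter_univ v
  have hA : ∀ u ∈ A, ∀ v ∉ A, T.1 v u := by
    intro u hu v hv
    rw [mem_A] at hu hv
    have huv : u ≠ v := fun h => hv (h ▸ hu)
    exact (T.beats_or_beats huv).resolve_left fun h => hv (hu.tail h)
  have hcard := A.card_add_card_compl
  rcases (by lia : #Aᶜ ≤ 2 ∨ #A ≤ 2) with h | h
  · refine .inl (T.exists_isSource_of_card_le_two ⟨b, by simpa [mem_A] using hab⟩ h ?_)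
    exact fun u hu v hv => hA v (by simpa using hv) u (by simpa using hu)
  · exact .inr (T.exists_isSink_of_card_le_two ⟨a, (mem_A a).2 .refl⟩ h hA)

section Erase

/-- The tournament obtained from `T` by deleting the vertex `u`. -/
def erase (T : Tournament V) (u : V) : Tournament {v // v ≠ u} :=
  ⟨fun v w => T.1 v w, fun _ _ h h' => (T.2.1 _ _ h).ne (congrArg Subtype.val h'),
    fun _ _ h => T.beats_iff_not_beats (Subtype.coe_ne_coe.2 h)⟩

theorem reflTransGen_of_erase {T : Tournament V} {u : V} {v w : {v // v ≠ u}}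
    (h : ReflTransGen (T.erase u).1 v w) : ReflTransGen T.1 v w :=
  h.lift Subtype.val fun _ _ h => h

theorem isStrong_of_erase {T : Tournament V} {u : V} {a b : {v // v ≠ u}}
    (ha : ∀ v, ReflTransGen (T.erase u).1 a v) (hb : ∀ v, ReflTransGen (T.erase u).1 v b)
    (hua : T.1 u a) (hbu : T.1 b u) : T.IsStrong := by
  have from_u (v : V) : ReflTransGen T.1 u v := by
    by_cases hv : v = u
    · exact hv ▸ .refl
    · exact .head hua (reflTransGen_of_erase (ha ⟨v, hv⟩))
  have to_u (v : V) : ReflTransGen T.1 v u := by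
    by_cases hv : v = u
    · exact hv ▸ .refl
    · exact .tail (reflTransGen_of_erase (hb ⟨v, hv⟩)) hbu
  exact fun v w => (to_u v).trans (from_u w)

theorem IsSource.of_erase {T : Tournament V} {u : V} {v : {v // v ≠ u}}
    (hv : (T.erase u).IsSource v) (hvu : T.1 v u) : T.IsSource v := by
  intro w hw
  by_cases hwu : w = u
  · exact hwu ▸ hvu
  · exact hv ⟨w, hwu⟩ fun h => hw (congrArg Subtype.val h)

/-- The tournament on `V` with out-neighbourhood `x` at the vertex `u` that restricts to `T` on
the other vertices. -/
def extend (u : V) (T : Tournament {v // v ≠ u}) (x : Finset {v // v ≠ u}) : Tournament V :=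
  ⟨fun v w => if hv : v = u then ∃ hw : w ≠ u, ⟨w, hw⟩ ∈ x
    else if hw : w = u then ⟨v, hv⟩ ∉ x else T.1 ⟨v, hv⟩ ⟨w, hw⟩, by
    rintro v w h rfl
    by_cases hv : v = u <;> simp [hv, T.irrefl] at h, by
    intro v w hvw
    by_cases hv : v = u <;> by_cases hw : w = u
    · exact absurd (hv.trans hw.symm) hvw
    · simp [hv, hw]
    · simp [hv, hw]
    · simpa [hv, hw] using T.beats_iff_not_beats fun h => hvw (congrArg Subtype.val h)⟩

theorem erase_extend {u : V} (T : Tournament {v // v ≠ u}) (x : Finset {v // v ≠ u}) :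
    (extend u T x).erase u = T := by
  ext v w
  simp [erase, extend, v.2, w.2]

variable [Fintype V]

/-- The set of vertices beaten by `u`, as a set of vertices of `T.erase u`. -/
def outFinset (T : Tournament V) (u : V) : Finset {v // v ≠ u} :=
  {v | T.1 u v}

theorem mem_outFinset {T : Tournament V} {u : V} {v : {v // v ≠ u}} :
    v ∈ T.outFinset u ↔ T.1 u v :=
  mem_filter_univ v

theorem beats_of_notMem_outFinset {T : Tournament V} {u : V} {v : {v // v ≠ u}}
    (hv : v ∉ T.outFinset u) : T.1 v u :=
  (T.beats_iff_not_beats v.2).2 (mt mem_outFinset.2 hv)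

theorem isSource_iff_outFinset_eq_univ {T : Tournament V} {u : V} :
    T.IsSource u ↔ T.outFinset u = univ := by
  simp only [IsSource, eq_univ_iff_forall, mem_outFinset, Subtype.forall]

theorem isSink_iff_outFinset_eq_empty {T : Tournament V} {u : V} :
    T.IsSink u ↔ T.outFinset u = ∅ := by
  simp only [IsSink, eq_empty_iff_forall_notMem, mem_outFinset, Subtype.forall]
  exact forall₂_congr fun v hv => T.beats_iff_not_beats hv

theorem outFinset_extend {u : V} (T : Tournament {v // v ≠ u}) (x : Finset {v // v ≠ u}) :
    (extend u T x).outFinset u = x := by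
  ext v
  simp [mem_outFinset, extend, v.2]

theorem extend_erase_outFinset (T : Tournament V) (u : V) :
    extend u (T.erase u) (T.outFinset u) = T := by
  ext v w
  by_cases hv : v = u <;> by_cases hw : w = u
  · simp [extend, hv, hw, T.irrefl]
  · simp [extend, hv, hw, mem_outFinset]
  · simp [extend, hv, hw, mem_outFinset, T.beats_iff_not_beats hv]
  · simp [extend, hv, hw, erase]

/-- A tournament amounts to its restriction to the vertices other than `u` together with the
out-neighbourhood of `u`. -/
def eraseEquiv (u : V) : Tournament V ≃ Tournament {v // v ≠ u} × Finset {v // v ≠ u} where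
  toFun T := (T.erase u, T.outFinset u)
  invFun p := extend u p.1 p.2
  left_inv T := T.extend_erase_outFinset u
  right_inv p := Prod.ext (erase_extend p.1 p.2) (outFinset_extend p.1 p.2)

end Erase

/- Built from `Finite V` alone, so that counts over `V` and over `{v // v ≠ u}` use the same
instance whichever decidability instances are found. -/
instance instFintype [Finite V] : Fintype (Tournament V) :=
  Fintype.ofFinite _

section Card

variable [Fintype V]

theorem card_filter_eq_sum_card_extend (u : V) (p : Tournament V → Prop) [DecidablePred p] :
    #{T | p T} = ∑ T : Tournament {v // v ≠ u}, #{x | p (extend u T x)} := by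
  simp only [card_filter]
  rw [← (eraseEquiv u).symm.sum_comp, Fintype.sum_prod_type]
  rfl

theorem card_filter_erase_and_outFinset_eq (u : V) (p : Tournament {v // v ≠ u} → Prop)
    [DecidablePred p] (x : Finset {v // v ≠ u}) :
    #{T : Tournament V | p (T.erase u) ∧ T.outFinset u = x} = #{T | p T} := by
  rw [card_filter_eq_sum_card_extend u, card_filter]
  refine sum_congr rfl fun T _ => ?_
  by_cases hT : p T <;> simp [erase_extend, outFinset_extend, hT, filter_eq']

theorem card_eq_two_pow (V : Type u) [Fintype V] :
    Fintype.card (Tournament V) = 2 ^ (Fintype.card V).choose 2 := by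
  induction h : Fintype.card V generalizing V with
  | zero =>
    have := Fintype.card_eq_zero_iff.1 h
    exact Fintype.card_eq_one_iff.2
      ⟨⟨isEmptyElim, fun u => isEmptyElim u, fun u => isEmptyElim u⟩,
        fun _ => Subtype.ext (Subsingleton.elim _ _)⟩
  | succ n ih =>
    obtain ⟨u⟩ : Nonempty V := Fintype.card_pos_iff.1 (by lia)
    have hcard : Fintype.card {v // v ≠ u} = n := by rw [card_subtype_ne, h, Nat.add_sub_cancel]
    rw [Fintype.card_congr (eraseEquiv u), Fintype.card_prod, ih _ hcard, Fintype.card_finset,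
      hcard, ← pow_add, Nat.choose_succ_succ' n 1, Nat.choose_one_right, add_comm]

theorem card_isSource (u : V) :
    #{T : Tournament V | T.IsSource u} = 2 ^ (Fintype.card V - 1).choose 2 := by
  have h := card_filter_erase_and_outFinset_eq u (fun _ => True) univ
  simpa [← isSource_iff_outFinset_eq_univ, card_eq_two_pow, card_subtype_ne] using h

theorem card_exists_isSource (V : Type u) [Fintype V] :
    #{T : Tournament V | ∃ u, T.IsSource u} =
      Fintype.card V * 2 ^ (Fintype.card V - 1).choose 2 := by
  have hdisj : Set.PairwiseDisjoint (univ : Finset V)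
      fun u => ({T | T.IsSource u} : Finset (Tournament V)) := by
    intro u _ v _ huv
    exact disjoint_filter.2 fun T _ hu hv => huv (hu.eq hv)
  calc #{T : Tournament V | ∃ u, T.IsSource u}
      = #(univ.biUnion fun u => ({T | T.IsSource u} : Finset (Tournament V))) := by
        congr 1; ext T; simp
    _ = ∑ u : V, #{T : Tournament V | T.IsSource u} := card_biUnion hdisj
    _ = Fintype.card V * 2 ^ (Fintype.card V - 1).choose 2 := by
        simp [card_isSource]

theorem card_not_exists_isSource (V : Type u) [Fintype V] :
    #{T : Tournament V | ¬ ∃ u, T.IsSource u} =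
      2 ^ (Fintype.card V).choose 2 - Fintype.card V * 2 ^ (Fintype.card V - 1).choose 2 := by
  have h := card_filter_add_card_filter_not (s := univ) fun T : Tournament V => ∃ u, T.IsSource u
  rw [card_exists_isSource, card_univ, card_eq_two_pow] at h
  lia

theorem card_isSink_and_not_exists_isSource_le (u : V) :
    #{T : Tournament V | T.IsSink u ∧ ¬ ∃ v, T.IsSource v} ≤
      #{T : Tournament {v // v ≠ u} | ¬ ∃ v, T.IsSource v} := by
  rw [← card_filter_erase_and_outFinset_eq u (fun T => ¬ ∃ v, T.IsSource v) ∅]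
  refine card_le_card (monotone_filter_right _ fun T _ ⟨hu, hT⟩ => ?_)
  exact ⟨fun ⟨v, hv⟩ => hT ⟨v, hv.of_erase (hu v v.2)⟩, isSink_iff_outFinset_eq_empty.1 hu⟩

theorem card_exists_isSource_or_exists_isSink_le (V : Type u) [Fintype V] :
    #{T : Tournament V | (∃ u, T.IsSource u) ∨ ∃ u, T.IsSink u} ≤
      Fintype.card V * (2 ^ (Fintype.card V - 1).choose 2 + (2 ^ (Fintype.card V - 1).choose 2 -
        (Fintype.card V - 1) * 2 ^ (Fintype.card V - 2).choose 2)) := by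
  calc #{T : Tournament V | (∃ u, T.IsSource u) ∨ ∃ u, T.IsSink u}
      ≤ #(({T | ∃ u, T.IsSource u} : Finset (Tournament V)) ∪
          univ.biUnion fun u => {T | T.IsSink u ∧ ¬ ∃ v, T.IsSource v}) := by
        refine card_le_card fun T hT => ?_
        simp only [mem_filter_univ, mem_union, mem_biUnion, mem_univ, true_and] at hT ⊢
        tauto
    _ ≤ #{T : Tournament V | ∃ u, T.IsSource u} +
          ∑ u : V, #{T : Tournament V | T.IsSink u ∧ ¬ ∃ v, T.IsSource v} :=
        (card_union_le _ _).trans (Nat.add_le_add_left card_biUnion_le _)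
    _ ≤ #{T : Tournament V | ∃ u, T.IsSource u} +
          ∑ u : V, #{T : Tournament {v // v ≠ u} | ¬ ∃ v, T.IsSource v} := by
        gcongr with u
        exact card_isSink_and_not_exists_isSource_le u
    _ = _ := by
        simp only [card_exists_isSource, card_not_exists_isSource, card_subtype_ne, sum_const,
          card_univ, smul_eq_mul, mul_add, Nat.sub_sub, Nat.reduceAdd]

theorem card_not_isStrong_lt_of_card_eq_five (hV : Fintype.card V = 5) :
    #{T : Tournament V | ¬ T.IsStrong} < 2 ^ 9 := by
  calc #{T : Tournament V | ¬ T.IsStrong}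
      ≤ #{T : Tournament V | (∃ u, T.IsSource u) ∨ ∃ u, T.IsSink u} :=
        card_le_card (monotone_filter_right _ fun _ _ hT =>
          exists_isSource_or_exists_isSink hV.le hT)
    _ ≤ 5 * (2 ^ Nat.choose 4 2 + (2 ^ Nat.choose 4 2 - 4 * 2 ^ Nat.choose 3 2)) := by
        simpa only [hV, Nat.reduceSub] using card_exists_isSource_or_exists_isSink_le V
    _ < 2 ^ 9 := by decide

end Card

section Extensions

variable [Fintype V]

theorem card_not_isStrong_extend_le_two {u : V} {T : Tournament {v // v ≠ u}} (hT : T.IsStrong) :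
    #{x | ¬ (extend u T x).IsStrong} ≤ 2 := by
  have hsub : ({x | ¬ (extend u T x).IsStrong} : Finset (Finset {v // v ≠ u})) ⊆ {∅, univ} := by
    intro x hx
    rw [mem_filter_univ] at hx
    rw [mem_insert, mem_singleton]
    by_contra! hne
    obtain ⟨a, ha⟩ := hne.1
    obtain ⟨b, hb⟩ := not_forall.1 (mt eq_univ_iff_forall.2 hne.2)
    rw [← outFinset_extend T x] at ha hb
    rw [← erase_extend T x] at hT
    exact hx (isStrong_of_erase (hT a) (hT · b) (mem_outFinset.1 ha)
      (beats_of_notMem_outFinset hb))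
  exact (card_le_card hsub).trans card_le_two

theorem four_mul_card_not_isStrong_extend_le {u : V} {T : Tournament {v // v ≠ u}}
    (hT : ¬ T.IsStrong) :
    4 * #{x | ¬ (extend u T x).IsStrong} ≤ 3 * 2 ^ Fintype.card {v // v ≠ u} := by
  have : Nonempty {v // v ≠ u} := by
    by_contra! h
    exact hT fun v => isEmptyElim v
  obtain ⟨a, ha⟩ := T.exists_forall_reflTransGen_from
  obtain ⟨b, hb⟩ := T.exists_forall_reflTransGen_to
  have hab : a ≠ b := by
    rintro rfl
    exact hT fun v w => (hb v).trans (ha w)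
  rw [← four_mul_card_filter_not_mem_and_notMem hab]
  gcongr with x
  rintro ⟨hax, hbx⟩
  rw [← outFinset_extend T x] at hax hbx
  rw [← erase_extend T x] at ha hb
  exact isStrong_of_erase ha hb (mem_outFinset.1 hax) (beats_of_notMem_outFinset hbx)

theorem four_mul_card_not_isStrong_le (u : V) :
    4 * #{T : Tournament V | ¬ T.IsStrong} ≤
      3 * 2 ^ (Fintype.card V - 1) * #{T : Tournament {v // v ≠ u} | ¬ T.IsStrong} +
        8 * 2 ^ (Fintype.card V - 1).choose 2 := by
  have hextend (T : Tournament {v // v ≠ u}) : 4 * #{x | ¬ (extend u T x).IsStrong} ≤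
      (if ¬ T.IsStrong then 3 * 2 ^ (Fintype.card V - 1) else 0) + 8 := by
    by_cases hT : T.IsStrong
    · have := card_not_isStrong_extend_le_two hT
      lia
    · have := four_mul_card_not_isStrong_extend_le hT
      rw [card_subtype_ne] at this
      simpa [hT] using this.trans (Nat.le_add_right _ 8)
  calc 4 * #{T : Tournament V | ¬ T.IsStrong}
      = ∑ T : Tournament {v // v ≠ u}, 4 * #{x | ¬ (extend u T x).IsStrong} := by
        rw [card_filter_eq_sum_card_extend u, mul_sum]
    _ ≤ ∑ T : Tournament {v // v ≠ u},
          ((if ¬ T.IsStrong then 3 * 2 ^ (Fintype.card V - 1) else 0) + 8) :=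
        sum_le_sum fun T _ => hextend T
    _ = _ := by
        rw [sum_add_distrib, ← sum_filter, sum_const, sum_const, card_univ, card_eq_two_pow,
          card_subtype_ne, smul_eq_mul, smul_eq_mul, mul_comm, mul_comm 8]

theorem two_mul_card_not_isStrong_lt (hV : 5 ≤ Fintype.card V) :
    2 * #{T : Tournament V | ¬ T.IsStrong} < 2 ^ (Fintype.card V).choose 2 := by
  obtain ⟨n, hn⟩ : ∃ n, Fintype.card V = n := ⟨_, rfl⟩
  rw [hn] at hV ⊢
  induction n, hV using Nat.le_induction generalizing V with
  | base =>
    have := card_not_isStrong_lt_of_card_eq_five hn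
    rw [show Nat.choose 5 2 = 10 by decide]
    lia
  | succ n h5 ih =>
    obtain ⟨u⟩ : Nonempty V := Fintype.card_pos_iff.1 (by lia)
    have hstep := four_mul_card_not_isStrong_le u
    have herase := ih (V := {v // v ≠ u}) (by rw [card_subtype_ne, hn, Nat.add_sub_cancel])
    rw [hn, Nat.add_sub_cancel] at hstep
    have hpow : 2 ^ 5 ≤ 2 ^ n := Nat.pow_le_pow_right two_pos h5
    refine Nat.lt_of_mul_lt_mul_left (a := 4) ?_
    calc 4 * (2 * #{T : Tournament V | ¬ T.IsStrong})
        ≤ 3 * 2 ^ n * (2 * #{T : Tournament {v // v ≠ u} | ¬ T.IsStrong}) +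
            16 * 2 ^ n.choose 2 := by lia
      _ < 3 * 2 ^ n * 2 ^ n.choose 2 + 16 * 2 ^ n.choose 2 := by gcongr
      _ ≤ 3 * 2 ^ n * 2 ^ n.choose 2 + 2 ^ n * 2 ^ n.choose 2 := by gcongr; lia
      _ = 4 * 2 ^ (n + 1).choose 2 := by
        rw [Nat.choose_succ_succ' n 1, Nat.choose_one_right]
        ring

end Extensions

end Tournament

theorem turanNum_add_self (n r : ℕ) :
    turanNum r (n + r) = turanNum r n + n * (r - 1) + r.choose 2 := by
  simpa [turanNum] using SimpleGraph.card_edgeFinset_turanGraph_add (n := n) (r := r)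

theorem turanNum_one (r : ℕ) : turanNum r 1 = 0 := by
  simp [turanNum, Subsingleton.elim (SimpleGraph.turanGraph 1 r) ⊥]

theorem turanNum_succ_add_one {n : ℕ} (hn : n ≠ 0) :
    turanNum n (n + 1) + 1 = (n + 1).choose 2 := by
  rw [Nat.add_comm n, turanNum_add_self, turanNum_one, Nat.add_comm 1,
    Nat.choose_succ_succ' n 1, Nat.choose_one_right]
  lia

theorem FreeOrient.not_isStrong {k : ℕ} {T : Tournament (Fin k)} (hT : FreeOrient (SFam k) T) :
    ¬ T.IsStrong :=
  fun hstrong => hT k T ⟨rfl, hstrong⟩ ⟨id, Function.injective_id, fun _ _ h => h⟩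

theorem numOrient_top_SFam_le (k : ℕ) :
    numOrient (⊤ : SimpleGraph (Fin k)) (SFam k) ≤ #{T : Tournament (Fin k) | ¬ T.IsStrong} := by
  rw [numOrient, Nat.card_eq_fintype_card, Fintype.card_subtype]
  exact card_le_card (monotone_filter_right _ fun _ _ hT => hT.not_isStrong)

/-- For `k ≥ 5`, the number of `𝓢_k`-free orientations of `K_k` is less than
`2 ^ t_{k-1}(k)`. -/
theorem numOrient_complete_k_lt (k : ℕ) (hk : 5 ≤ k) :
    numOrient (⊤ : SimpleGraph (Fin k)) (SFam k) < 2 ^ turanNum (k - 1) k := by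
  have hle := numOrient_top_SFam_le k
  have hlt := Tournament.two_mul_card_not_isStrong_lt (V := Fin k) (by rwa [Fintype.card_fin])
  have hturan : turanNum (k - 1) k + 1 = k.choose 2 := by
    simpa [Nat.sub_add_cancel (show 1 ≤ k by lia)] using
      turanNum_succ_add_one (n := k - 1) (by lia)
  rw [Fintype.card_fin, ← hturan, pow_succ] at hlt
  lia
end
end

section
/- Let n and k be positive integers with n > k ≥ 4. Then t_{k−1}(k) + (log₂ 3 + k − 3)(n − k) + t_{k−1}(n − k) < t_{k−1}(n). -/
open scoped Classical

noncomputable section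

/-!
Write `r = k - 1` and `m = n - k`. Deleting one vertex of every part, and then a vertex of a largest
part, takes `T_r(m + r + 1)` to `T_r(m)`; the second deletion loses `m - ⌊m / r⌋` edges, so that
`t_r(m + r + 1) - t_r(r + 1) - t_r(m) = r * m - ⌊m / r⌋ ≥ (r - 1 / r) * m`.
For `r ≥ 3` the slope `r - 1 / r` is at least `r - 1 / 3`, which exceeds `log₂ 3 + r - 2` because
`3 ^ 3 < 2 ^ 5`.
-/

theorem turanNum_of_le {r n : ℕ} (h : n ≤ r) : turanNum r n = n.choose 2 := by
  have hgraph : SimpleGraph.turanGraph n r = ⊤ := SimpleGraph.turanGraph_eq_top.2 (Or.inr h)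
  have hcard := SimpleGraph.card_edgeFinset_top_eq_card_choose_two (V := Fin n)
  rw [Fintype.card_fin] at hcard
  rw [turanNum, ← hcard]
  congr!

theorem turanNum_add (r n : ℕ) :
    turanNum r (n + r) = turanNum r n + n * (r - 1) + r.choose 2 := by
  unfold turanNum
  convert SimpleGraph.card_edgeFinset_turanGraph_add (n := n) (r := r)

theorem turanNum_succ_add_div {r : ℕ} (hr : 0 < r) (n : ℕ) :
    turanNum r (n + 1) + n / r = turanNum r n + n := by
  induction n using Nat.strong_induction_on with
  | _ n ih =>
    rcases lt_or_ge n r with hlt | hge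
    · rw [turanNum_of_le hlt, turanNum_of_le hlt.le, Nat.div_eq_of_lt hlt, add_zero,
        Nat.choose_succ_succ' n 1, Nat.choose_one_right, add_comm]
    · obtain ⟨m, rfl⟩ := Nat.exists_eq_add_of_le' hge
      have hm : turanNum r (m + 1) + m / r = turanNum r m + m := ih m (by omega)
      rw [add_right_comm m r 1, turanNum_add, turanNum_add, Nat.add_div_right m hr, add_one_mul]
      omega

theorem turanNum_add_succ_add_div {r : ℕ} (hr : 0 < r) (m : ℕ) :
    turanNum r (m + (r + 1)) + m / r = turanNum r (r + 1) + r * m + turanNum r m := by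
  obtain ⟨s, rfl⟩ := Nat.exists_eq_add_one_of_ne_zero hr.ne'
  have hlarge := turanNum_add (s + 1) (m + 1)
  have hclique := turanNum_add (s + 1) 1
  have hone : turanNum (s + 1) 1 = 0 := turanNum_of_le (by omega)
  have hsucc := turanNum_succ_add_div hr m
  rw [add_right_comm m 1, add_assoc m] at hlarge
  rw [add_comm 1] at hclique
  simp only [Nat.add_sub_cancel] at hlarge hclique
  linarith

theorem turanNum_succ_add_mul_add_le {r : ℕ} (hr : 0 < r) (m : ℕ) :
    (turanNum r (r + 1) : ℝ) + (r - 1 / r) * m + turanNum r m ≤ turanNum r (m + (r + 1)) := by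
  have hexact : (turanNum r (m + (r + 1)) : ℝ) + (m / r : ℕ) =
      turanNum r (r + 1) + r * m + turanNum r m := by
    exact_mod_cast turanNum_add_succ_add_div hr m
  have hfloor : ((m / r : ℕ) : ℝ) ≤ m / r := Nat.cast_div_le
  have hexpand : ((r : ℝ) - 1 / r) * m = r * m - m / r := by ring
  linarith

theorem logb_two_three_lt : Real.logb 2 3 < 5 / 3 := by
  have hpow : Real.logb 2 (3 ^ 3) < Real.logb 2 (2 ^ 5) :=
    Real.logb_lt_logb one_lt_two (by norm_num) (by norm_num)
  rw [Real.logb_pow, Real.logb_pow, Real.logb_self_eq_one one_lt_two] at hpow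
  push_cast at hpow
  linarith

/-- For `n > k ≥ 4`:
`t_{k-1}(k) + (log₂ 3 + k - 3)(n - k) + t_{k-1}(n - k) < t_{k-1}(n)`. -/
theorem turanNum_ineq_clique (n k : ℕ) (hk : 4 ≤ k) (hn : k < n) :
    (turanNum (k - 1) k : ℝ) +
      (Real.logb 2 3 + (k : ℝ) - 3) * ((n : ℝ) - (k : ℝ)) +
      (turanNum (k - 1) (n - k) : ℝ) < (turanNum (k - 1) n : ℝ) := by
  obtain ⟨r, rfl⟩ : ∃ r, k = r + 1 := Nat.exists_eq_add_one_of_ne_zero (by omega)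
  obtain ⟨m, rfl⟩ := Nat.exists_eq_add_of_le' hn.le
  have hr : (3 : ℝ) ≤ r := by exact_mod_cast (by omega : 3 ≤ r)
  have hm : (0 : ℝ) < m := by exact_mod_cast (by omega : 0 < m)
  have hinv : 1 / (r : ℝ) ≤ 1 / 3 := one_div_le_one_div_of_le three_pos hr
  have hslope : Real.logb 2 3 + ((r + 1 : ℕ) : ℝ) - 3 < r - 1 / r := by
    push_cast
    linarith [logb_two_three_lt]
  rw [Nat.add_sub_cancel, Nat.add_sub_cancel, Nat.cast_add m, add_sub_cancel_right]
  calc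
    _ < (turanNum r (r + 1) : ℝ) + (r - 1 / r) * m + turanNum r m := by gcongr
    _ ≤ turanNum r (m + (r + 1)) := turanNum_succ_add_mul_add_le (by omega) m
end
end
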